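/- Let k and ℓ be fixed positive integers with 1 ≤ ℓ ≤ k and gcd(ℓ, k) = 1. Then there exists a constant C > 0 (depending on k) such that for all real x ≥ 16, |Σ_{2 ≤ n ≤ x, p(n) ≡ ℓ (mod k)} μ(n) ω(n)| ≤ C · x · (log log x)⁴ / log x, where the sum runs over integers 2 ≤ n ≤ x whose smallest prime factor p(n) is congruent to ℓ modulo k. -/

import Mathlib

open Finset ArithmeticFunction Real

/-!
Write `n = p * m` with `p` the smallest prime factor of `n`. The terms with smallest prime factor
`p` contribute `-∑ μ(m) (1 + ω(m))` over the `m ≤ x / p` that are free of prime factors `≤ p`. As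
`ω` counts the primes dividing `m`, this inner sum is bounded by a sum, over `d = 1` and prime
powers `d`, of `|M_p(x / (p * d))|`, where `M_p` is the Mertens function of the integers free of
prime factors `≤ p`. Now `M_p` is the convolution of the ordinary Mertens function with the
indicator of the integers all of whose prime factors are `≤ p`. The latter is controlled by
Rankin's trick, and the former saves any power of the logarithm: `1 / ζ` and its derivatives grow
at most polynomially on `Re s > 1`, uniformly up to the line `Re s = 1`, so a smoothed Perron
integral of a high derivative of `1 / ζ` can be moved to within `1 / log x` of that line. Summing
over `p` costs `∑ 1 / p ≪ log log x`.

This works for `log p` up to a constant times `log x / log log x`. The `n ≤ x` free of primes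
below that threshold are so few that they can be counted trivially, each having `≪ log log x`
prime factors.
-/

namespace MoebiusOmega

/-! ### Truncating the Dirichlet series of `ζ` -/

section ZetaTruncation

open MeasureTheory

variable {N : ℕ} {s : ℂ}

/-- The remainder integral `∫_N^∞ {t} t^(-s-1) dt` left over when the Dirichlet series of `ζ` is
truncated at `N`; it converges for `0 < re s`. -/
noncomputable def fractIntegral (N : ℕ) (s : ℂ) : ℂ :=
  ∫ t in Set.Ioi (N : ℝ), ((Int.fract t : ℝ) : ℂ) * (t : ℂ) ^ (-(s + 1))

lemma norm_fract_le_one (t : ℝ) : ‖((Int.fract t : ℝ) : ℂ)‖ ≤ 1 := by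
  rw [Complex.norm_real, Real.norm_eq_abs, abs_of_nonneg (Int.fract_nonneg t)]
  exact (Int.fract_lt_one t).le

lemma norm_fractIntegral_le (hN : 1 ≤ N) (hs : 0 < s.re) :
    ‖fractIntegral N s‖ ≤ (N : ℝ) ^ (-s.re) / s.re := by
  have hN0 : (0 : ℝ) < N := by exact_mod_cast hN
  have hint : ∫ t in Set.Ioi (N : ℝ), t ^ (-s.re - 1) = (N : ℝ) ^ (-s.re) / s.re := by
    rw [integral_Ioi_rpow_of_lt (by linarith) hN0, sub_add_cancel, neg_div_neg_eq]
  rw [← hint]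
  refine norm_integral_le_of_norm_le (integrableOn_Ioi_rpow_of_lt (by linarith) hN0)
    ((ae_restrict_iff' measurableSet_Ioi).mpr (.of_forall fun t ht => ?_))
  rw [norm_mul, Complex.norm_cpow_eq_rpow_re_of_pos (hN0.trans ht), neg_add']
  exact mul_le_of_le_one_left (Real.rpow_nonneg (hN0.trans ht).le _) (norm_fract_le_one t)

lemma fractIntegral_eq_mellin (N : ℕ) (s : ℂ) :
    fractIntegral N s =
      mellin ((Set.Ioi (N : ℝ)).indicator fun t => ((Int.fract t : ℝ) : ℂ)) (-s) := by
  rw [fractIntegral, mellin, setIntegral_eq_of_subset_of_forall_sdiff_eq_zero measurableSet_Ioi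
    (Set.Ioi_subset_Ioi (Nat.cast_nonneg N))]
  · refine setIntegral_congr_fun measurableSet_Ioi fun t ht => ?_
    rw [Set.indicator_of_mem ht, smul_eq_mul, mul_comm, neg_add']
  · intro t ht
    rw [Set.indicator_of_notMem ht.2, smul_zero]

lemma differentiableAt_fractIntegral (hN : 1 ≤ N) (hs : 0 < s.re) :
    DifferentiableAt ℂ (fractIntegral N) s := by
  set f : ℝ → ℂ := (Set.Ioi (N : ℝ)).indicator fun t => ((Int.fract t : ℝ) : ℂ)
  have hf_le (t : ℝ) : ‖f t‖ ≤ 1 :=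
    (norm_indicator_le_norm_self _ t).trans (norm_fract_le_one t)
  have hf_meas : Measurable f :=
    (Complex.measurable_ofReal.comp measurable_fract).indicator measurableSet_Ioi
  have hf_zero : ∀ᶠ t in nhdsWithin (0 : ℝ) (Set.Ioi 0), f t = 0 := by
    filter_upwards [mem_nhdsWithin_of_mem_nhds (Iio_mem_nhds (show (0 : ℝ) < N by
      exact_mod_cast hN))] with t ht
    exact Set.indicator_of_notMem (not_lt.mpr (le_of_lt ht)) _
  have hmellin : DifferentiableAt ℂ (mellin f) (-s) := by
    refine mellin_differentiableAt_of_isBigO_rpow (a := 0) (b := -s.re - 1) ?_ ?_ ?_ ?_ ?_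
    · exact ((locallyIntegrable_const (1 : ℝ)).mono hf_meas.aestronglyMeasurable
        (.of_forall fun t => by simpa using hf_le t)).locallyIntegrableOn _
    · exact .of_bound 1 (.of_forall fun t => by simpa using hf_le t)
    · simpa using hs
    · exact .of_bound 1 (hf_zero.mono fun t ht => by simp [ht])
    · simp
  rw [show fractIntegral N = mellin f ∘ Neg.neg from funext (fractIntegral_eq_mellin N)]
  exact hmellin.comp s differentiableAt_id.neg

lemma sum_Icc_indicator_Ioi (N n : ℕ) :
    ∑ k ∈ Icc 1 n, (Set.Ioi N).indicator (1 : ℕ → ℂ) k = ((n - N : ℕ) : ℂ) := by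
  classical
  have hfilter : {k ∈ Icc 1 n | k ∈ Set.Ioi N} = Ioc N n := by
    ext k
    simp only [mem_filter, mem_Icc, Set.mem_Ioi, mem_Ioc]
    lia
  rw [sum_indicator_eq_sum_filter, hfilter]
  simp

lemma riemannZeta_eq_sum_add_LSeries_indicator (N : ℕ) (hs : 1 < s.re) :
    riemannZeta s =
      ∑ n ∈ Icc 1 N, (n : ℂ) ^ (-s) + LSeries ((Set.Ioi N).indicator 1) s := by
  have hterm (n : ℕ) : LSeries.term ((Set.Ioi N).indicator 1) s n =
      LSeries.term 1 s n - if n ∈ Icc 1 N then (n : ℂ) ^ (-s) else 0 := by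
    rcases Nat.eq_zero_or_pos n with rfl | hn
    · simp
    · by_cases h : n ≤ N <;>
        simp [LSeries.term_of_ne_zero hn.ne', Nat.succ_le_iff, Set.indicator, hn, h,
          not_lt.mpr, not_le.mp, Complex.cpow_neg]
  have hhead : HasSum (fun n : ℕ => if n ∈ Icc 1 N then (n : ℂ) ^ (-s) else 0)
      (∑ n ∈ Icc 1 N, (n : ℂ) ^ (-s)) := by
    have := hasSum_sum_of_ne_finset_zero (L := .unconditional ℕ)
      (f := fun n : ℕ => if n ∈ Icc 1 N then (n : ℂ) ^ (-s) else 0) (s := Icc 1 N)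
      fun n hn => if_neg hn
    rwa [sum_congr rfl fun n hn => if_pos hn] at this
  rw [← LSeries_one_eq_riemannZeta hs, LSeries, LSeries, tsum_congr hterm,
    ((LSeriesSummable_one_iff.mpr hs).hasSum.sub hhead).tsum_eq]
  ring

lemma natCast_natFloor_sub_mul_cpow {t : ℝ} (ht : (N : ℝ) < t) :
    ((⌊t⌋₊ - N : ℕ) : ℂ) * (t : ℂ) ^ (-(s + 1)) =
      (t : ℂ) ^ (-s) - N * (t : ℂ) ^ (-(s + 1)) -
        ((Int.fract t : ℝ) : ℂ) * (t : ℂ) ^ (-(s + 1)) := by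
  have ht0 : 0 < t := N.cast_nonneg.trans_lt ht
  have hfloor : ((⌊t⌋₊ : ℕ) : ℂ) = (t : ℂ) - ((Int.fract t : ℝ) : ℂ) := by
    rw [← Complex.ofReal_natCast, natCast_floor_eq_intCast_floor ht0.le,
      ← Int.self_sub_fract, Complex.ofReal_sub]
  have hpow : (t : ℂ) ^ (-s) = t * (t : ℂ) ^ (-(s + 1)) := by
    rw [show -s = 1 + -(s + 1) by ring, Complex.cpow_add _ _ (by exact_mod_cast ht0.ne'),
      Complex.cpow_one]
  rw [Nat.cast_sub (Nat.le_floor ht.le), hfloor, hpow]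
  ring

lemma integral_natFloor_sub_mul_cpow (hN : 1 ≤ N) (hs : 1 < s.re) :
    ∫ t in Set.Ioi (1 : ℝ), ((⌊t⌋₊ - N : ℕ) : ℂ) * (t : ℂ) ^ (-(s + 1)) =
      (N : ℂ) ^ (1 - s) / (s - 1) - (N : ℂ) ^ (1 - s) / s - fractIntegral N s := by
  have hN0 : (0 : ℝ) < N := by exact_mod_cast hN
  have hs1 : 1 - s ≠ 0 := by
    intro h
    have hre : 1 - s.re = 0 := by simpa using congrArg Complex.re h
    linarith
  have hint₀ : IntegrableOn (fun t : ℝ => (t : ℂ) ^ (-s)) (Set.Ioi (N : ℝ)) :=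
    integrableOn_Ioi_cpow_of_lt (by simpa using hs) hN0
  have hint₁ : IntegrableOn (fun t : ℝ => (t : ℂ) ^ (-(s + 1))) (Set.Ioi (N : ℝ)) :=
    integrableOn_Ioi_cpow_of_lt (by simp; linarith) hN0
  have hint_fract : IntegrableOn
      (fun t : ℝ => ((Int.fract t : ℝ) : ℂ) * (t : ℂ) ^ (-(s + 1))) (Set.Ioi (N : ℝ)) :=
    hint₁.bdd_mul (c := 1)
      (Complex.measurable_ofReal.comp measurable_fract).aestronglyMeasurable
      (.of_forall norm_fract_le_one)
  have hsplit : ∫ t in Set.Ioi (1 : ℝ), ((⌊t⌋₊ - N : ℕ) : ℂ) * (t : ℂ) ^ (-(s + 1)) =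
      ∫ t in Set.Ioi (N : ℝ), ((t : ℂ) ^ (-s) - N * (t : ℂ) ^ (-(s + 1)) -
        ((Int.fract t : ℝ) : ℂ) * (t : ℂ) ^ (-(s + 1))) := by
    rw [setIntegral_eq_of_subset_of_forall_sdiff_eq_zero measurableSet_Ioi
      (Set.Ioi_subset_Ioi (show (1 : ℝ) ≤ N by exact_mod_cast hN))]
    · exact setIntegral_congr_fun measurableSet_Ioi fun t ht => natCast_natFloor_sub_mul_cpow ht
    · intro t ht
      rw [Nat.sub_eq_zero_of_le (Nat.floor_le_of_le (not_lt.mp ht.2)), Nat.cast_zero, zero_mul]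
  have hNpow : (N : ℂ) ^ (1 - s) = N * (N : ℂ) ^ (-s) := by
    rw [sub_eq_add_neg, Complex.cpow_add _ _ (by exact_mod_cast hN0.ne'), Complex.cpow_one]
  have hint_sub : IntegrableOn
      (fun t : ℝ => (t : ℂ) ^ (-s) - N * (t : ℂ) ^ (-(s + 1))) (Set.Ioi (N : ℝ)) :=
    hint₀.sub (hint₁.const_mul _)
  rw [hsplit, integral_sub hint_sub hint_fract,
    integral_sub hint₀ (hint₁.const_mul _), integral_const_mul,
    integral_Ioi_cpow_of_lt (by simpa using hs) hN0,
    integral_Ioi_cpow_of_lt (by simp; linarith) hN0, fractIntegral,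
    show -s + 1 = 1 - s by ring, show -(s + 1) + 1 = -s by ring, Complex.ofReal_natCast, hNpow,
    ← neg_sub 1 s]
  field_simp

lemma riemannZeta_eq_truncation_of_one_lt_re (hN : 1 ≤ N) (hs : 1 < s.re) :
    riemannZeta s = ∑ n ∈ Icc 1 N, (n : ℂ) ^ (-s) + (N : ℂ) ^ (1 - s) / (s - 1) -
      s * fractIntegral N s := by
  have hs0 : s ≠ 0 := by
    rintro rfl
    norm_num at hs
  have hs1 : s - 1 ≠ 0 := by
    intro h
    rw [sub_eq_zero.mp h] at hs
    simp at hs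
  have hLSeries := LSeries_eq_mul_integral ((Set.Ioi N).indicator (1 : ℕ → ℂ)) zero_le_one hs
    (LSeriesSummable_of_bounded_of_one_lt_re (m := 1)
      (fun n _ => (norm_indicator_le_norm_self _ n).trans (by simp)) hs)
    (.of_bound 1 (.of_forall fun n => by simp [sum_Icc_indicator_Ioi]))
  simp only [sum_Icc_indicator_Ioi] at hLSeries
  rw [riemannZeta_eq_sum_add_LSeries_indicator N hs, hLSeries,
    integral_natFloor_sub_mul_cpow hN hs]
  field_simp
  ring

/-- Multiplied by `s - 1`, both sides are holomorphic on the half-plane `0 < re s`. -/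
lemma riemannZeta_eq_truncation (hN : 1 ≤ N) (hs : 0 < s.re) (hs1 : s ≠ 1) :
    riemannZeta s = ∑ n ∈ Icc 1 N, (n : ℂ) ^ (-s) + (N : ℂ) ^ (1 - s) / (s - 1) -
      s * fractIntegral N s := by
  have hN0 : (N : ℂ) ≠ 0 := by exact_mod_cast (by lia : N ≠ 0)
  set R : ℂ → ℂ := fun z =>
    (z - 1) * (∑ n ∈ Icc 1 N, (n : ℂ) ^ (-z)) + (N : ℂ) ^ (1 - z) -
      (z - 1) * (z * fractIntegral N z) with hR
  have hopen : IsOpen {z : ℂ | 0 < z.re} := isOpen_lt continuous_const Complex.continuous_re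
  have hR_analytic : AnalyticOnNhd ℂ R {z | 0 < z.re} := by
    refine DifferentiableOn.analyticOnNhd (fun z hz => ?_) hopen
    have hsum : DifferentiableAt ℂ (fun z : ℂ => ∑ n ∈ Icc 1 N, (n : ℂ) ^ (-z)) z :=
      .fun_sum fun n hn => differentiableAt_id.neg.const_cpow
        (.inl (by exact_mod_cast Nat.one_le_iff_ne_zero.mp (mem_Icc.mp hn).1))
    have hpow : DifferentiableAt ℂ (fun z : ℂ => (N : ℂ) ^ (1 - z)) z :=
      ((differentiableAt_const _).sub differentiableAt_id).const_cpow (.inl hN0)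
    have hfract := differentiableAt_fractIntegral hN (s := z) hz
    exact DifferentiableAt.differentiableWithinAt (by fun_prop)
  have heq : Set.EqOn riemannZeta₁ R {z | 0 < z.re} := by
    refine AnalyticOnNhd.eqOn_of_preconnected_of_eventuallyEq
      (differentiable_riemannZeta₁.differentiableOn.analyticOnNhd hopen) hR_analytic
      (convex_halfSpace_re_gt 0).isPreconnected (z₀ := 2) (by simp) ?_
    filter_upwards [(isOpen_lt continuous_const Complex.continuous_re).mem_nhds
      (show (1 : ℝ) < (2 : ℂ).re by simp)] with z (hz : 1 < z.re)
    have hz1 : z ≠ 1 := by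
      rintro rfl
      simp at hz
    have := riemannZeta_eq_inv_sub_mul hz1
    rw [riemannZeta_eq_truncation_of_one_lt_re hN hz] at this
    rw [hR]
    have hz1' := sub_ne_zero.mpr hz1
    field_simp at this ⊢
    linear_combination -this
  rw [riemannZeta_eq_inv_sub_mul hs1, heq hs, hR]
  have := sub_ne_zero.mpr hs1
  field_simp

end ZetaTruncation

/-! ### Upper and lower bounds for `ζ` near the line `re s = 1` -/

section ZetaBounds

lemma rpow_two_mul_le {b x : ℝ} (hb : b ≤ 1) (hx : 0 ≤ x) :
    (2 * x) ^ b ≤ 2 * x ^ b := by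
  rw [Real.mul_rpow zero_le_two hx]
  gcongr
  simpa using Real.rpow_le_rpow_of_exponent_le one_le_two hb

lemma norm_sum_Icc_cpow_neg_le {δ : ℝ} (hδ : 0 < δ) (N : ℕ) {s : ℂ} (hs : 1 - δ ≤ s.re) :
    ‖∑ n ∈ Icc 1 N, (n : ℂ) ^ (-s)‖ ≤ (N : ℝ) ^ δ * (1 + Real.log N) := by
  have hterm (n : ℕ) (hn : n ∈ Icc 1 N) : ‖(n : ℂ) ^ (-s)‖ ≤ (N : ℝ) ^ δ * (n : ℝ)⁻¹ := by
    obtain ⟨hn1, hnN⟩ := mem_Icc.mp hn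
    have hn1' : (1 : ℝ) ≤ n := by exact_mod_cast hn1
    rw [Complex.norm_natCast_cpow_of_pos hn1]
    calc (n : ℝ) ^ (-s).re ≤ (n : ℝ) ^ (δ + -1) :=
          Real.rpow_le_rpow_of_exponent_le hn1' (by rw [Complex.neg_re]; linarith)
      _ = (n : ℝ) ^ δ * (n : ℝ)⁻¹ := by rw [Real.rpow_add (by linarith), Real.rpow_neg_one]
      _ ≤ (N : ℝ) ^ δ * (n : ℝ)⁻¹ := by gcongr
  have hharmonic : ∑ n ∈ Icc 1 N, (n : ℝ)⁻¹ ≤ 1 + Real.log N := by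
    simpa [harmonic_eq_sum_Icc] using harmonic_le_one_add_log N
  calc ‖∑ n ∈ Icc 1 N, (n : ℂ) ^ (-s)‖ ≤ ∑ n ∈ Icc 1 N, (N : ℝ) ^ δ * (n : ℝ)⁻¹ :=
        norm_sum_le_of_le _ hterm
    _ = (N : ℝ) ^ δ * ∑ n ∈ Icc 1 N, (n : ℝ)⁻¹ := by rw [mul_sum]
    _ ≤ (N : ℝ) ^ δ * (1 + Real.log N) := by gcongr

lemma norm_natCast_cpow_one_sub_div_le {δ : ℝ} {N : ℕ} (hN : 1 ≤ N) {s : ℂ}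
    (hs : 1 - δ ≤ s.re) (him : 1 ≤ |s.im|) :
    ‖(N : ℂ) ^ (1 - s) / (s - 1)‖ ≤ (N : ℝ) ^ δ := by
  have hden : 1 ≤ ‖s - 1‖ :=
    him.trans (by simpa using Complex.abs_im_le_norm (s - 1))
  rw [norm_div, Complex.norm_natCast_cpow_of_pos hN]
  refine (div_le_self (by positivity) hden).trans
    (Real.rpow_le_rpow_of_exponent_le (by exact_mod_cast hN) ?_)
  simp only [Complex.sub_re, Complex.one_re]
  linarith

lemma norm_mul_fractIntegral_le {δ : ℝ} (hδ : δ ≤ 1 / 2) {N : ℕ} (hN : 1 ≤ N) {s : ℂ}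
    (hs : 1 - δ ≤ s.re) :
    ‖s * fractIntegral N s‖ ≤ (1 + 2 * |s.im|) * (N : ℝ) ^ (δ - 1) := by
  have hre : 0 < s.re := by linarith
  have hnorm : ‖s‖ ≤ s.re + |s.im| := by
    simpa [abs_of_pos hre] using Complex.norm_le_abs_re_add_abs_im s
  have hquot : |s.im| / s.re ≤ 2 * |s.im| := by
    rw [div_le_iff₀ hre]
    nlinarith [abs_nonneg s.im]
  rw [norm_mul]
  calc ‖s‖ * ‖fractIntegral N s‖ ≤ (s.re + |s.im|) * ((N : ℝ) ^ (-s.re) / s.re) :=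
        mul_le_mul hnorm (norm_fractIntegral_le hN hre) (norm_nonneg _) (by positivity)
    _ = (1 + |s.im| / s.re) * (N : ℝ) ^ (-s.re) := by field_simp
    _ ≤ (1 + 2 * |s.im|) * (N : ℝ) ^ (δ - 1) := by
        gcongr
        · exact_mod_cast hN
        · linarith

/-- Truncate at `N = ⌈|im s|⌉`. -/
lemma exists_norm_riemannZeta_le {δ : ℝ} (hδ : 0 < δ) (hδ1 : δ ≤ 1 / 2) :
    ∃ C > 0, ∀ s : ℂ, 1 - δ ≤ s.re → 1 ≤ |s.im| → ‖riemannZeta s‖ ≤ C * |s.im| ^ (2 * δ) := by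
  refine ⟨2 * (5 + 1 / δ), by positivity, fun s hs him => ?_⟩
  set τ := |s.im|
  set N := ⌈τ⌉₊
  have hN : 1 ≤ N := Nat.one_le_ceil_iff.mpr (by linarith)
  have hN1 : (1 : ℝ) ≤ N := by exact_mod_cast hN
  have hτN : τ ≤ N := Nat.le_ceil τ
  have hNτ : (N : ℝ) ≤ 2 * τ := by linarith [Nat.ceil_lt_add_one (zero_le_one.trans him)]
  have hlog : Real.log N ≤ (N : ℝ) ^ δ / δ := Real.log_le_rpow_div (by positivity) hδ
  have hsq : (N : ℝ) ^ δ * (N : ℝ) ^ δ = (N : ℝ) ^ (2 * δ) := by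
    rw [← Real.rpow_add (by linarith), two_mul]
  have hNδ : (N : ℝ) ^ δ ≤ (N : ℝ) ^ (2 * δ) :=
    Real.rpow_le_rpow_of_exponent_le hN1 (by linarith)
  have hNδ1 : (N : ℝ) * (N : ℝ) ^ (δ - 1) = (N : ℝ) ^ δ := by
    rw [Real.rpow_sub_one (by linarith)]
    field_simp
  have hs1 : s ≠ 1 := by
    rintro rfl
    norm_num [τ] at him
  rw [riemannZeta_eq_truncation hN (by linarith) hs1]
  calc _ ≤ (N : ℝ) ^ δ * (1 + Real.log N) + (N : ℝ) ^ δ + (1 + 2 * τ) * (N : ℝ) ^ (δ - 1) :=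
        (norm_sub_le _ _).trans (add_le_add ((norm_add_le _ _).trans (add_le_add
          (norm_sum_Icc_cpow_neg_le hδ N hs) (norm_natCast_cpow_one_sub_div_le hN hs him)))
          (norm_mul_fractIntegral_le hδ1 hN hs))
    _ ≤ (N : ℝ) ^ δ * (1 + (N : ℝ) ^ δ / δ) + (N : ℝ) ^ δ + (3 * N) * (N : ℝ) ^ (δ - 1) := by
        gcongr
        linarith
    _ = 5 * (N : ℝ) ^ δ + 1 / δ * (N : ℝ) ^ (2 * δ) := by
        rw [mul_assoc, hNδ1, ← hsq]
        ring
    _ ≤ (5 + 1 / δ) * (N : ℝ) ^ (2 * δ) := by linarith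
    _ ≤ (5 + 1 / δ) * (2 * τ) ^ (2 * δ) := by gcongr
    _ ≤ (5 + 1 / δ) * (2 * τ ^ (2 * δ)) := by
        gcongr
        exact rpow_two_mul_le (by linarith) (abs_nonneg _)
    _ = 2 * (5 + 1 / δ) * τ ^ (2 * δ) := by ring

lemma exists_norm_deriv_riemannZeta_le {δ : ℝ} (hδ : 0 < δ) (hδ1 : δ ≤ 1 / 2) :
    ∃ C > 0, ∀ s : ℂ, 1 - δ / 2 ≤ s.re → 2 ≤ |s.im| →
      ‖deriv riemannZeta s‖ ≤ C * |s.im| ^ (2 * δ) := by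
  obtain ⟨C, hC, hζ⟩ := exists_norm_riemannZeta_le hδ hδ1
  refine ⟨2 * C / (δ / 2), by positivity, fun s hs him => ?_⟩
  have hball (z : ℂ) (hz : z ∈ Metric.closedBall s (δ / 2)) :
      1 - δ ≤ z.re ∧ 1 ≤ |z.im| ∧ |z.im| ≤ 2 * |s.im| := by
    rw [mem_closedBall_iff_norm] at hz
    have hre := (Complex.abs_re_le_norm (z - s)).trans hz
    have him' := (Complex.abs_im_le_norm (z - s)).trans hz
    simp only [Complex.sub_re, Complex.sub_im] at hre him'
    have hlower := (abs_sub_abs_le_abs_sub s.im z.im).trans_eq (abs_sub_comm _ _)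
    have hupper := abs_sub_abs_le_abs_sub z.im s.im
    refine ⟨?_, ?_, ?_⟩ <;> linarith [(abs_le.mp hre).1]
  have hdiff : DiffContOnCl ℂ riemannZeta (Metric.ball s (δ / 2)) := by
    refine DifferentiableOn.diffContOnCl_ball (U := {1}ᶜ)
      (fun z hz => (differentiableAt_riemannZeta hz).differentiableWithinAt) ?_
    rintro z hz rfl
    have := (hball _ hz).2.1
    simp only [Complex.one_im, abs_zero] at this
    linarith
  refine (Complex.norm_deriv_le_of_forall_mem_sphere_norm_le (C := 2 * C * |s.im| ^ (2 * δ))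
    (by positivity) hdiff fun z hz => ?_).trans_eq (by ring)
  obtain ⟨hre, him1, him2⟩ := hball z (Metric.sphere_subset_closedBall hz)
  calc ‖riemannZeta z‖ ≤ C * |z.im| ^ (2 * δ) := hζ z hre him1
    _ ≤ C * (2 * |s.im|) ^ (2 * δ) := by gcongr
    _ ≤ C * (2 * |s.im| ^ (2 * δ)) := by
        gcongr
        exact rpow_two_mul_le (by linarith) (abs_nonneg _)
    _ = 2 * C * |s.im| ^ (2 * δ) := by ring

lemma exists_norm_riemannZeta_sub_le {δ : ℝ} (hδ : 0 < δ) (hδ1 : δ ≤ 1 / 2) :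
    ∃ C > 0, ∀ s z : ℂ, 1 - δ / 2 ≤ s.re → 1 - δ / 2 ≤ z.re → s.im = z.im → 2 ≤ |s.im| →
      ‖riemannZeta s - riemannZeta z‖ ≤ C * |s.im| ^ (2 * δ) * |s.re - z.re| := by
  obtain ⟨C, hC, hderiv⟩ := exists_norm_deriv_riemannZeta_le hδ hδ1
  refine ⟨C, hC, fun s z hs hz him h2 => ?_⟩
  have hconv : Convex ℝ ({w : ℂ | 1 - δ / 2 ≤ w.re} ∩ {w | w.im = s.im}) :=
    (convex_halfSpace_re_ge _).inter (convex_hyperplane Complex.imLm.isLinear _)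
  have hsub : s - z = ((s.re - z.re : ℝ) : ℂ) := by apply Complex.ext <;> simp [him]
  have := hconv.norm_image_sub_le_of_norm_deriv_le (f := riemannZeta) (x := z) (y := s)
    (C := C * |s.im| ^ (2 * δ)) (fun w hw => differentiableAt_riemannZeta ?_)
    (fun w hw => ?_) ⟨hz, him.symm⟩ ⟨hs, rfl⟩
  · rwa [hsub, Complex.norm_real, Real.norm_eq_abs] at this
  · rintro rfl
    have him0 : (0 : ℝ) = s.im := by simpa using hw.2
    norm_num [← him0] at h2
  · have him' : w.im = s.im := hw.2
    rw [← him'] at h2 ⊢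
    exact hderiv w hw.1 h2

lemma norm_riemannZeta_one_add_le {η : ℝ} (hη : 0 < η) : ‖riemannZeta (1 + η)‖ ≤ 2 + 1 / η := by
  have hre : (1 + (η : ℂ)).re = 1 + η := by simp
  have hnorm : ‖1 + (η : ℂ)‖ = 1 + η := by
    rw [← Complex.ofReal_one, ← Complex.ofReal_add, Complex.norm_real, Real.norm_eq_abs,
      abs_of_pos (by linarith)]
  have hsum : ‖∑ n ∈ Icc (1 : ℕ) 1, (n : ℂ) ^ (-(1 + (η : ℂ)))‖ = 1 := by simp
  have hpole : ‖((1 : ℕ) : ℂ) ^ (1 - (1 + (η : ℂ))) / (1 + (η : ℂ) - 1)‖ = 1 / η := by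
    simp [abs_of_pos hη]
  have hfract : ‖(1 + (η : ℂ)) * fractIntegral 1 (1 + η)‖ ≤ 1 := by
    have := norm_fractIntegral_le le_rfl (s := 1 + (η : ℂ)) (by rw [hre]; linarith)
    rw [hre, Nat.cast_one, Real.one_rpow, le_div_iff₀ (by linarith)] at this
    rwa [norm_mul, hnorm, mul_comm]
  rw [riemannZeta_eq_truncation_of_one_lt_re le_rfl (by rw [hre]; linarith)]
  calc _ ≤ 1 + 1 / η + 1 := (norm_sub_le _ _).trans
        (add_le_add ((norm_add_le _ _).trans_eq (by rw [hsum, hpole])) hfract)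
    _ = 2 + 1 / η := by ring

lemma one_le_norm_riemannZeta_three_four_one {η : ℝ} (hη : 0 < η) (y : ℝ) :
    1 ≤ ‖riemannZeta (1 + η)‖ ^ 3 * ‖riemannZeta (1 + η + Complex.I * y)‖ ^ 4 *
      ‖riemannZeta (1 + η + 2 * Complex.I * y)‖ := by
  have := DirichletCharacter.norm_LFunction_product_ge_one (1 : DirichletCharacter ℂ 1) hη y
  simpa [DirichletCharacter.LFunctionTrivChar, DirichletCharacter.LFunction_modOne_eq, norm_mul,
    norm_pow] using this

lemma exists_le_norm_riemannZeta_pow_four {b : ℝ} (hb : 0 < b) (hb1 : b ≤ 1) :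
    ∃ c > 0, ∀ s : ℂ, 1 ≤ |s.im| → 1 < s.re → s.re ≤ 3 →
      c * (s.re - 1) ^ 3 * |s.im| ^ (-b) ≤ ‖riemannZeta s‖ ^ 4 := by
  obtain ⟨C, hC, hζ⟩ := exists_norm_riemannZeta_le (δ := b / 2) (by positivity) (by linarith)
  rw [mul_div_cancel₀ b two_ne_zero] at hζ
  refine ⟨1 / (125 * (2 * C)), by positivity, fun s him hs hs3 => ?_⟩
  set η := s.re - 1 with hη
  have hη0 : 0 < η := by linarith
  have hτ : 0 < |s.im| := by linarith
  have hzeta_real : ‖riemannZeta (1 + η)‖ ≤ 5 / η := by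
    refine (norm_riemannZeta_one_add_le hη0).trans ?_
    rw [← sub_nonneg, show 5 / η - (2 + 1 / η) = 2 * (2 - η) / η by field_simp; ring]
    exact div_nonneg (by linarith) hη0.le
  set w : ℂ := 1 + η + 2 * Complex.I * s.im with hw
  have hwre : w.re = s.re := by simp [hw, hη]
  have hwim : |w.im| = 2 * |s.im| := by simp [hw, abs_mul]
  have hzeta_two : ‖riemannZeta w‖ ≤ 2 * C * |s.im| ^ b :=
    calc ‖riemannZeta w‖ ≤ C * (2 * |s.im|) ^ b :=
          hwim ▸ hζ w (by linarith) (by linarith)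
      _ ≤ C * (2 * |s.im| ^ b) := by
          gcongr
          exact rpow_two_mul_le hb1 hτ.le
      _ = 2 * C * |s.im| ^ b := by ring
  have hs_eq : 1 + (η : ℂ) + Complex.I * s.im = s := by apply Complex.ext <;> simp [hη]
  have h341 : 1 ≤ (5 / η) ^ 3 * ‖riemannZeta s‖ ^ 4 * (2 * C * |s.im| ^ b) := by
    refine (hs_eq ▸ one_le_norm_riemannZeta_three_four_one hη0 s.im).trans ?_
    gcongr
  rw [Real.rpow_neg hτ.le]
  have : 0 < |s.im| ^ b := by positivity
  calc _ = 1 * (1 / (125 * (2 * C)) * η ^ 3 * (|s.im| ^ b)⁻¹) := by ring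
    _ ≤ (5 / η) ^ 3 * ‖riemannZeta s‖ ^ 4 * (2 * C * |s.im| ^ b) *
          (1 / (125 * (2 * C)) * η ^ 3 * (|s.im| ^ b)⁻¹) := by gcongr
    _ = ‖riemannZeta s‖ ^ 4 := by
        field_simp
        ring

lemma exists_le_norm_riemannZeta_right {b : ℝ} (hb : 0 < b) (hb1 : b ≤ 1) :
    ∃ c > 0, ∀ k > 0, ∀ s : ℂ, 1 ≤ |s.im| → 1 + k ^ 4 * |s.im| ^ (-(5 * b)) ≤ s.re →
      s.re ≤ 3 → c * k ^ 3 * |s.im| ^ (-(4 * b)) ≤ ‖riemannZeta s‖ := by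
  obtain ⟨c, hc, hζ⟩ := exists_le_norm_riemannZeta_pow_four hb hb1
  refine ⟨c ^ (1 / 4 : ℝ), by positivity, fun k hk s him hs hs3 => ?_⟩
  set τ := |s.im|
  have hτ : 0 < τ := by linarith
  have hη : 0 < k ^ 4 * τ ^ (-(5 * b)) := by positivity
  have hc4 : (c ^ (1 / 4 : ℝ)) ^ 4 = c := by
    rw [← Real.rpow_natCast, ← Real.rpow_mul hc.le]
    norm_num
  have hτ16 : (τ ^ (-(4 * b))) ^ 4 = (τ ^ (-(5 * b))) ^ 3 * τ ^ (-b) := by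
    simp only [← Real.rpow_natCast, ← Real.rpow_mul hτ.le, ← Real.rpow_add hτ]
    congr 1
    push_cast
    ring
  refine le_of_pow_le_pow_left₀ four_ne_zero (norm_nonneg _) ?_
  calc (c ^ (1 / 4 : ℝ) * k ^ 3 * τ ^ (-(4 * b))) ^ 4
      = c * (k ^ 4 * τ ^ (-(5 * b))) ^ 3 * τ ^ (-b) := by
        rw [mul_pow, mul_pow, hc4, hτ16]
        ring
    _ ≤ c * (s.re - 1) ^ 3 * τ ^ (-b) := by
        gcongr
        linarith
    _ ≤ ‖riemannZeta s‖ ^ 4 := hζ s him (by linarith) hs3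

lemma exists_norm_riemannZeta_sub_le_of_abs_sub_le {b e : ℝ} (hb : 0 < b) (hb1 : b ≤ 1)
    (he : 0 < e) : ∃ k > 0, k ≤ 1 ∧ k ≤ b / 4 ∧ ∀ s z : ℂ, 1 - b / 4 ≤ s.re → 1 - b / 4 ≤ z.re →
      s.im = z.im → 2 ≤ |s.im| → |s.re - z.re| ≤ 2 * (k ^ 4 * |s.im| ^ (-(5 * b))) →
      ‖riemannZeta s - riemannZeta z‖ ≤ e * k ^ 3 / 2 * |s.im| ^ (-(4 * b)) := by
  obtain ⟨C, hC, hsub⟩ :=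
    exists_norm_riemannZeta_sub_le (δ := b / 2) (by positivity) (by linarith)
  rw [mul_div_cancel₀ b two_ne_zero] at hsub
  set k : ℝ := min (min 1 (e / (4 * C))) (b / 4)
  have hk : 0 < k := by positivity
  have hke : k ≤ e / (4 * C) := (min_le_left _ _).trans (min_le_right _ _)
  refine ⟨k, hk, (min_le_left _ _).trans (min_le_left _ _), min_le_right _ _,
    fun s z hs hz him h2 hdist => ?_⟩
  set τ := |s.im|
  have hτ : 0 < τ := by linarith
  have hτb : τ ^ b * τ ^ (-(5 * b)) = τ ^ (-(4 * b)) := by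
    rw [← Real.rpow_add hτ]
    ring_nf
  calc _ ≤ C * τ ^ b * |s.re - z.re| := hsub s z (by linarith) (by linarith) him h2
    _ ≤ C * τ ^ b * (2 * (k ^ 4 * τ ^ (-(5 * b)))) := by gcongr
    _ = 2 * C * k * k ^ 3 * (τ ^ b * τ ^ (-(5 * b))) := by ring
    _ ≤ 2 * C * (e / (4 * C)) * k ^ 3 * (τ ^ b * τ ^ (-(5 * b))) := by gcongr
    _ = e * k ^ 3 / 2 * τ ^ (-(4 * b)) := by
      rw [hτb]
      field_simp
      norm_num

/-- The 3-4-1 inequality bounds `ζ` from below at distance `η = k⁴|im s|^(-5b)` to the right of the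
line, and the bound survives a horizontal move of length `2η`, over which `ζ` changes by less. -/
lemma exists_le_norm_riemannZeta {b : ℝ} (hb : 0 < b) (hb1 : b ≤ 1) :
    ∃ c > 0, c ≤ 1 ∧ ∀ s : ℂ, 2 ≤ |s.im| → 1 - c * |s.im| ^ (-(5 * b)) ≤ s.re → s.re ≤ 5 / 2 →
      c * |s.im| ^ (-(4 * b)) ≤ ‖riemannZeta s‖ := by
  obtain ⟨e, he, hright⟩ := exists_le_norm_riemannZeta_right hb hb1
  obtain ⟨k, hk, hk1, hkb, hsub⟩ := exists_norm_riemannZeta_sub_le_of_abs_sub_le hb hb1 he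
  have hk4 : k ^ 4 ≤ k := pow_le_of_le_one hk.le hk1 four_ne_zero
  refine ⟨min (k ^ 4) (e * k ^ 3 / 2), by positivity, (min_le_left _ _).trans (hk4.trans hk1),
    fun s him hs hs2 => ?_⟩
  set τ := |s.im|
  have : 0 < τ := by linarith
  set η := k ^ 4 * τ ^ (-(5 * b)) with hη
  have hη0 : 0 < η := by positivity
  have hηk : η ≤ k := (mul_le_of_le_one_right (by positivity)
    (Real.rpow_le_one_of_one_le_of_nonpos (by linarith) (by linarith))).trans hk4
  have hre : 1 - η ≤ s.re := by
    refine le_trans ?_ hs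
    rw [hη]
    gcongr
    exact min_le_left _ _
  set z : ℂ := ⟨max (1 + η) s.re, s.im⟩
  have hsz : s.re ≤ z.re := le_max_right _ _
  have hz : e * k ^ 3 * τ ^ (-(4 * b)) ≤ ‖riemannZeta z‖ :=
    hright k hk z (by linarith) (le_max_left _ _) (max_le (by linarith) (by linarith))
  have hdist : |s.re - z.re| ≤ 2 * η := by
    have hz_le : z.re ≤ s.re + 2 * η := max_le (by linarith) (by linarith)
    exact abs_le.mpr ⟨by linarith, by linarith⟩
  have hmove : ‖riemannZeta s - riemannZeta z‖ ≤ e * k ^ 3 / 2 * τ ^ (-(4 * b)) :=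
    hsub s z (by linarith) (by linarith) rfl him hdist
  calc _ ≤ e * k ^ 3 / 2 * τ ^ (-(4 * b)) := by
        gcongr
        exact min_le_right _ _
    _ ≤ ‖riemannZeta s‖ := by
        have := norm_sub_norm_le (riemannZeta z) (riemannZeta s)
        rw [norm_sub_rev] at this
        linarith

end ZetaBounds

/-! ### Derivatives of `1 / ζ` -/

section InvZeta

lemma inv_thirtyTwo_mul_rpow_le {a x y : ℝ} (ha : 0 ≤ a) (ha5 : a ≤ 5) (hx : 0 < x)
    (hy : 0 < y) (hxy : x ≤ 2 * y) : y ^ (-a) / 32 ≤ x ^ (-a) := by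
  have htwo : (1 / 32 : ℝ) ≤ 2 ^ (-a) :=
    calc (1 / 32 : ℝ) = 2 ^ (-5 : ℝ) := by
          rw [Real.rpow_neg zero_le_two]
          norm_num
      _ ≤ 2 ^ (-a) := Real.rpow_le_rpow_of_exponent_le one_le_two (by linarith)
  calc y ^ (-a) / 32 = 1 / 32 * y ^ (-a) := by ring
    _ ≤ 2 ^ (-a) * y ^ (-a) := by gcongr
    _ = (2 * y) ^ (-a) := (Real.mul_rpow zero_le_two hy.le).symm
    _ ≤ x ^ (-a) := Real.rpow_le_rpow_of_nonpos hx hxy (by linarith)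

lemma exists_le_norm_riemannZeta_closedBall {b : ℝ} (hb : 0 < b) (hb1 : b ≤ 1) :
    ∃ c > 0, ∀ s : ℂ, 1 ≤ s.re → s.re ≤ 2 → 3 ≤ |s.im| →
      ∀ z ∈ Metric.closedBall s (c * |s.im| ^ (-(5 * b))),
        z ≠ 1 ∧ c * |s.im| ^ (-(4 * b)) ≤ ‖riemannZeta z‖ := by
  obtain ⟨c, hc, hc1, hζ⟩ := exists_le_norm_riemannZeta hb hb1
  refine ⟨c / 32, by positivity, fun s hs hs2 him z hz => ?_⟩
  have hτ : 0 < |s.im| := by linarith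
  have hτ1 : |s.im| ^ (-(5 * b)) ≤ 1 :=
    Real.rpow_le_one_of_one_le_of_nonpos (by linarith) (by linarith)
  have hr : c / 32 * |s.im| ^ (-(5 * b)) ≤ 1 / 32 :=
    calc c / 32 * |s.im| ^ (-(5 * b)) ≤ 1 / 32 * 1 := by gcongr
      _ = 1 / 32 := mul_one _
  rw [mem_closedBall_iff_norm] at hz
  have hre := (Complex.abs_re_le_norm (z - s)).trans hz
  have him' := ((Complex.abs_im_le_norm (z - s)).trans hz).trans hr
  simp only [Complex.sub_re, Complex.sub_im] at hre him'
  have hlower := (abs_sub_abs_le_abs_sub s.im z.im).trans_eq (abs_sub_comm _ _)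
  have hupper := abs_sub_abs_le_abs_sub z.im s.im
  have hz2 : 2 ≤ |z.im| := by linarith
  refine ⟨fun h => by norm_num [h] at hz2, ?_⟩
  have hre' : 1 - c * |z.im| ^ (-(5 * b)) ≤ z.re := by
    have : c / 32 * |s.im| ^ (-(5 * b)) ≤ c * |z.im| ^ (-(5 * b)) := by
      rw [div_mul_eq_mul_div, mul_div_assoc]
      gcongr
      exact inv_thirtyTwo_mul_rpow_le (by positivity) (by linarith) (by linarith) hτ (by linarith)
    linarith [(abs_le.mp hre).1]
  calc c / 32 * |s.im| ^ (-(4 * b)) = c * (|s.im| ^ (-(4 * b)) / 32) := by ring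
    _ ≤ c * |z.im| ^ (-(4 * b)) := by
        gcongr
        exact inv_thirtyTwo_mul_rpow_le (by positivity) (by linarith) (by linarith) hτ
          (by linarith)
    _ ≤ ‖riemannZeta z‖ := hζ z hz2 hre' (by linarith [(abs_le.mp hre).2])

/-- Cauchy's estimate on a disc of radius `≍ |im s|^(-5b)`, on which `1 / ζ ≪ |im s|^(4b)`, with
`b = ε / (5 * j + 4)`. -/
lemma exists_norm_iteratedDeriv_inv_riemannZeta_le_of_three_le (j : ℕ) {ε : ℝ} (hε : 0 < ε)
    (hε1 : ε ≤ 1) :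
    ∃ C > 0, ∀ s : ℂ, 1 ≤ s.re → s.re ≤ 2 → 3 ≤ |s.im| →
      ‖iteratedDeriv j (fun s => (riemannZeta s)⁻¹) s‖ ≤ C * |s.im| ^ ε := by
  set b : ℝ := ε / (5 * j + 4) with hb
  have hb0 : 0 < b := by positivity
  have hb1 : b ≤ 1 := by
    rw [hb, div_le_one (by positivity)]
    linarith [(Nat.cast_nonneg j : (0 : ℝ) ≤ j)]
  obtain ⟨c, hc, hζ⟩ := exists_le_norm_riemannZeta_closedBall hb0 hb1
  refine ⟨j.factorial * c⁻¹ * c⁻¹ ^ j, by positivity, fun s hs hs2 him => ?_⟩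
  set τ := |s.im|
  have hτ : 0 < τ := by linarith
  set r := c * τ ^ (-(5 * b)) with hr
  have hr0 : 0 < r := by positivity
  have hζ0 : 0 < c * τ ^ (-(4 * b)) := by positivity
  have hdiff : DiffContOnCl ℂ (fun s => (riemannZeta s)⁻¹) (Metric.ball s r) := by
    refine DifferentiableOn.diffContOnCl_ball (fun z hz => ?_) subset_rfl
    obtain ⟨hz1, hz⟩ := hζ s hs hs2 him z hz
    exact ((differentiableAt_riemannZeta hz1).inv
      (norm_pos_iff.mp (hζ0.trans_le hz))).differentiableWithinAt
  have hpow : τ ^ ε = τ ^ (4 * b) * (τ ^ (5 * b)) ^ j := by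
    rw [← Real.rpow_mul_natCast hτ.le, ← Real.rpow_add hτ, hb]
    congr 1
    field_simp
    ring
  calc _ ≤ j.factorial * (c * τ ^ (-(4 * b)))⁻¹ / r ^ j := by
        refine Complex.norm_iteratedDeriv_le_of_forall_mem_sphere_norm_le j hr0 hdiff
          fun z hz => ?_
        rw [norm_inv]
        gcongr
        exact (hζ s hs hs2 him z (Metric.sphere_subset_closedBall hz)).2
    _ = j.factorial * c⁻¹ * c⁻¹ ^ j * τ ^ ε := by
        rw [hr, hpow, Real.rpow_neg hτ.le, Real.rpow_neg hτ.le, mul_pow, inv_pow, inv_pow]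
        field_simp

lemma inv_riemannZeta_eq_sub_one_mul_inv {s : ℂ} (hs : s ≠ 1) :
    (riemannZeta s)⁻¹ = (s - 1) * (riemannZeta₁ s)⁻¹ := by
  rw [riemannZeta_eq_inv_sub_mul hs, mul_inv, inv_inv]

lemma riemannZeta₁_ne_zero_of_one_le_re {s : ℂ} (hs : 1 ≤ s.re) : riemannZeta₁ s ≠ 0 := by
  rcases eq_or_ne s 1 with rfl | hs1
  · simp [riemannZeta₁_one]
  · have := riemannZeta_ne_zero_of_one_le_re hs
    rw [riemannZeta_eq_inv_sub_mul hs1] at this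
    exact right_ne_zero_of_mul this

lemma exists_norm_iteratedDeriv_inv_riemannZeta_le_of_abs_im_le (j : ℕ) (T : ℝ) :
    ∃ C, ∀ s : ℂ, 1 < s.re → s.re ≤ 2 → |s.im| ≤ T →
      ‖iteratedDeriv j (fun s => (riemannZeta s)⁻¹) s‖ ≤ C := by
  set g : ℂ → ℂ := fun s => (s - 1) * (riemannZeta₁ s)⁻¹
  set U : Set ℂ := {s | riemannZeta₁ s ≠ 0}
  have hU : IsOpen U := isOpen_ne_fun differentiable_riemannZeta₁.continuous continuous_const
  have hK : Set.Icc (1 : ℝ) 2 ×ℂ Set.Icc (-T) T ⊆ U := fun s hs =>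
    riemannZeta₁_ne_zero_of_one_le_re hs.1.1
  have hg : DifferentiableOn ℂ g U := fun s hs =>
    ((differentiableAt_id.sub_const 1).mul
      ((differentiable_riemannZeta₁ s).inv hs)).differentiableWithinAt
  have hcont : ContinuousOn (iteratedDeriv j g) U := by
    rw [iteratedDeriv_eq_iterate]
    exact ((hg.analyticOnNhd hU).iterated_deriv j).continuousOn
  obtain ⟨C, hC⟩ :=
    (isCompact_Icc.reProdIm isCompact_Icc).exists_bound_of_continuousOn (hcont.mono hK)
  refine ⟨C, fun s hs hs2 him => ?_⟩
  have hs1 : s ≠ 1 := by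
    rintro rfl
    simp at hs
  have heq : (fun s => (riemannZeta s)⁻¹) =ᶠ[nhds s] g := by
    filter_upwards [isOpen_ne.mem_nhds hs1] with z hz
    exact inv_riemannZeta_eq_sub_one_mul_inv hz
  rw [heq.iteratedDeriv_eq j]
  exact hC s ⟨⟨hs.le, hs2⟩, abs_le.mp him⟩

lemma exists_norm_iteratedDeriv_inv_riemannZeta_le (j : ℕ) {ε : ℝ} (hε : 0 < ε) (hε1 : ε ≤ 1) :
    ∃ C > 0, ∀ s : ℂ, 1 < s.re → s.re ≤ 2 →
      ‖iteratedDeriv j (fun s => (riemannZeta s)⁻¹) s‖ ≤ C * (1 + |s.im|) ^ ε := by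
  obtain ⟨C₁, hC₁, hhigh⟩ :=
    exists_norm_iteratedDeriv_inv_riemannZeta_le_of_three_le j hε hε1
  obtain ⟨C₂, hlow⟩ := exists_norm_iteratedDeriv_inv_riemannZeta_le_of_abs_im_le j 3
  refine ⟨max C₁ C₂, by positivity, fun s hs hs2 => ?_⟩
  have hpow : 1 ≤ (1 + |s.im|) ^ ε :=
    Real.one_le_rpow (by linarith [abs_nonneg s.im]) hε.le
  have hC : 0 ≤ max C₁ C₂ := by positivity
  rcases le_total |s.im| 3 with him | him
  · calc _ ≤ max C₁ C₂ := (hlow s hs hs2 him).trans (le_max_right _ _)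
      _ ≤ max C₁ C₂ * (1 + |s.im|) ^ ε := le_mul_of_one_le_right hC hpow
  · calc _ ≤ C₁ * |s.im| ^ ε := hhigh s hs.le hs2 him
      _ ≤ max C₁ C₂ * (1 + |s.im|) ^ ε := by
          gcongr
          · exact le_max_left _ _
          · linarith

end InvZeta

/-! ### A smoothed Perron formula -/

section Perron

open MeasureTheory

/-- The Mellin transform of the tent function `t ↦ max (1 - t) 0`, written as the difference of the
transforms of `1` and `t` on `(0, 1]`. -/
noncomputable def tentMellin (s : ℂ) : ℂ := 1 / s - 1 / (s + 1)

lemma hasMellin_tent {s : ℂ} (hs : 0 < s.re) :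
    HasMellin (fun t : ℝ => ((max (1 - t) 0 : ℝ) : ℂ)) s (tentMellin s) := by
  have hone := hasMellin_one_Ioc hs
  have hid := hasMellin_cpow_Ioc 1 (s := s) (by rw [Complex.one_re]; linarith)
  have heq : Set.EqOn (fun t : ℝ => (t : ℂ) ^ (s - 1) •
      ((Set.Ioc (0 : ℝ) 1).indicator (fun _ => (1 : ℂ)) t -
        (Set.Ioc (0 : ℝ) 1).indicator (fun t : ℝ => (t : ℂ) ^ (1 : ℂ)) t))
      (fun t : ℝ => (t : ℂ) ^ (s - 1) • ((max (1 - t) 0 : ℝ) : ℂ)) (Set.Ioi 0) := by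
    intro t (ht : 0 < t)
    dsimp only
    by_cases h : t ≤ 1
    · simp [Set.indicator, ht, h]
    · simp [Set.indicator, ht, h, (not_le.mp h).le]
  have hsub := hasMellin_sub hone.1 hid.1
  rw [hone.2, hid.2] at hsub
  exact ⟨hsub.1.congr_fun heq measurableSet_Ioi,
    (setIntegral_congr_fun measurableSet_Ioi heq).symm.trans hsub.2⟩

lemma norm_tentMellin_le {σ : ℝ} (hσ : 1 ≤ σ) (y : ℝ) :
    ‖tentMellin (σ + y * Complex.I)‖ ≤ 2 * (1 + |y|) ^ (-2 : ℝ) := by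
  set s : ℂ := σ + y * Complex.I with hs
  have hre : s.re = σ := by simp [hs]
  have him : s.im = y := by simp [hs]
  have hsq : (1 + |y|) ^ 2 / 2 ≤ ‖s‖ ^ 2 := by
    rw [← Complex.normSq_eq_norm_sq, Complex.normSq_apply, hre, him]
    nlinarith [sq_nonneg (1 - |y|), sq_abs y]
  have hsucc : ‖s‖ ≤ ‖s + 1‖ := by
    refine le_of_sq_le_sq ?_ (norm_nonneg _)
    simp only [← Complex.normSq_eq_norm_sq, Complex.normSq_apply, Complex.add_re, Complex.add_im,
      Complex.one_re, Complex.one_im, hre]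
    nlinarith
  have hs0 : s ≠ 0 := by
    intro h
    rw [h, Complex.zero_re] at hre
    linarith
  have hs1 : s + 1 ≠ 0 := norm_pos_iff.mp ((norm_pos_iff.mpr hs0).trans_le hsucc)
  have heq : tentMellin s = (s * (s + 1))⁻¹ := by
    rw [tentMellin]
    field_simp
    ring
  rw [Real.rpow_neg (by positivity), Real.rpow_two, heq, norm_inv, norm_mul]
  calc (‖s‖ * ‖s + 1‖)⁻¹ ≤ ((1 + |y|) ^ 2 / 2)⁻¹ := by
        gcongr
        nlinarith [norm_nonneg s]
    _ = 2 * ((1 + |y|) ^ 2)⁻¹ := by rw [inv_div, div_eq_mul_inv]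

lemma integrable_one_add_abs_rpow {θ : ℝ} (hθ : θ < -1) :
    Integrable fun y : ℝ => (1 + |y|) ^ θ := by
  have := integrable_one_add_norm (E := ℝ) (μ := volume) (r := -θ)
    (by rw [Module.finrank_self, Nat.cast_one]; linarith)
  simpa using this

lemma measurable_tentMellin (σ : ℝ) :
    Measurable fun y : ℝ => tentMellin (σ + y * Complex.I) := by
  unfold tentMellin
  fun_prop

lemma integrable_tentMellin {σ : ℝ} (hσ : 1 ≤ σ) :
    Integrable fun y : ℝ => tentMellin (σ + y * Complex.I) :=
  ((integrable_one_add_abs_rpow (by norm_num)).const_mul 2).mono'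
    (measurable_tentMellin σ).aestronglyMeasurable (.of_forall (norm_tentMellin_le hσ))

lemma integral_cpow_neg_mul_tentMellin {σ : ℝ} (hσ : 1 ≤ σ) {u : ℝ} (hu : 0 < u) :
    (1 / (2 * π) : ℝ) • ∫ y : ℝ, (u : ℂ) ^ (-(σ + y * Complex.I) : ℂ) *
      tentMellin (σ + y * Complex.I) = ((max (1 - u) 0 : ℝ) : ℂ) := by
  set tent : ℝ → ℂ := fun t => ((max (1 - t) 0 : ℝ) : ℂ)
  have htent (y : ℝ) :
      HasMellin tent (σ + y * Complex.I) (tentMellin (σ + y * Complex.I)) := by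
    refine hasMellin_tent (zero_lt_one.trans_le ?_)
    simpa using hσ
  have hvert : Complex.VerticalIntegrable (mellin tent) σ := by
    simpa only [Complex.VerticalIntegrable, (htent _).2] using integrable_tentMellin hσ
  have := mellinInv_mellin_eq σ tent hu (by simpa using (htent 0).1) hvert
    (by fun_prop)
  simpa only [mellinInv, (htent _).2, smul_eq_mul] using this

variable {a : ℕ → ℂ} {x σ : ℝ}

lemma norm_term_mul_tentMellin (hx : 0 < x) (n : ℕ) (y : ℝ) :
    ‖LSeries.term a (σ + y * Complex.I) n *
      ((x : ℂ) ^ (σ + y * Complex.I) * tentMellin (σ + y * Complex.I))‖ =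
      ‖LSeries.term a σ n‖ * x ^ σ * ‖tentMellin (σ + y * Complex.I)‖ := by
  have hre : (σ + y * Complex.I : ℂ).re = σ := by simp
  rw [norm_mul, norm_mul, Complex.norm_cpow_eq_rpow_re_of_pos hx, LSeries.norm_term_eq,
    LSeries.norm_term_eq, hre, Complex.ofReal_re, mul_assoc]

lemma integrable_term_mul_tentMellin (hx : 0 < x) (hσ : 1 ≤ σ) (n : ℕ) :
    Integrable fun y : ℝ => LSeries.term a (σ + y * Complex.I) n *
      ((x : ℂ) ^ (σ + y * Complex.I) * tentMellin (σ + y * Complex.I)) := by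
  have hx0 : (x : ℂ) ≠ 0 := by exact_mod_cast hx.ne'
  have hterm : Measurable fun y : ℝ => LSeries.term a (σ + y * Complex.I) n := by
    rcases eq_or_ne n 0 with rfl | hn
    · simp
    · simp only [LSeries.term_of_ne_zero hn]
      exact measurable_const.div (Continuous.measurable
        (Continuous.const_cpow (by fun_prop) (.inl (Nat.cast_ne_zero.mpr hn))))
  have hpow : Measurable fun y : ℝ => (x : ℂ) ^ (σ + y * Complex.I) :=
    (Continuous.const_cpow (by fun_prop) (.inl hx0)).measurable
  exact ((integrable_tentMellin hσ).norm.const_mul _).mono'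
    (hterm.mul (hpow.mul (measurable_tentMellin σ))).aestronglyMeasurable
    (.of_forall fun y => (norm_term_mul_tentMellin hx n y).le)

lemma integral_term_mul_tentMellin (hx : 0 < x) (hσ : 1 ≤ σ) {n : ℕ} (hn : n ≠ 0) :
    (1 / (2 * π) : ℝ) • ∫ y : ℝ, LSeries.term a (σ + y * Complex.I) n *
      ((x : ℂ) ^ (σ + y * Complex.I) * tentMellin (σ + y * Complex.I)) =
      a n * ((max (1 - n / x) 0 : ℝ) : ℂ) := by
  have hn0 : (0 : ℝ) < n := by positivity
  have hquot (s : ℂ) : (((n : ℝ) / x : ℝ) : ℂ) ^ (-s) = (x : ℂ) ^ s / (n : ℂ) ^ s := by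
    rw [div_eq_mul_inv, Complex.ofReal_mul,
      Complex.mul_cpow_ofReal_nonneg hn0.le (by positivity), Complex.ofReal_inv,
      Complex.inv_cpow _ _ (Complex.arg_ofReal_of_nonneg hx.le ▸ Real.pi_pos.ne),
      Complex.cpow_neg, Complex.cpow_neg, inv_inv, Complex.ofReal_natCast, mul_comm,
      div_eq_mul_inv]
  rw [← integral_cpow_neg_mul_tentMellin hσ (div_pos hn0 hx), mul_smul_comm,
    ← integral_const_mul]
  congr 2
  ext y
  rw [LSeries.term_of_ne_zero hn, hquot]
  ring

lemma sum_mul_one_sub_div_eq_integral (hx : 0 < x) (hσ : 1 ≤ σ) (ha : LSeriesSummable a σ) :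
    ∑ n ∈ Ioc 0 ⌊x⌋₊, a n * (1 - n / x) = (1 / (2 * π) : ℝ) • ∫ y : ℝ,
      LSeries a (σ + y * Complex.I) *
        ((x : ℂ) ^ (σ + y * Complex.I) * tentMellin (σ + y * Complex.I)) := by
  have hsummable : Summable fun n => ∫ y : ℝ, ‖LSeries.term a (σ + y * Complex.I) n *
      ((x : ℂ) ^ (σ + y * Complex.I) * tentMellin (σ + y * Complex.I))‖ := by
    simp only [norm_term_mul_tentMellin hx, integral_const_mul]
    exact (ha.norm.mul_right _).mul_right _
  simp only [LSeries, ← tsum_mul_right]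
  rw [← integral_tsum_of_summable_integral_norm (integrable_term_mul_tentMellin hx hσ) hsummable,
    ← tsum_const_smul'', tsum_eq_sum (s := Ioc 0 ⌊x⌋₊)]
  · refine sum_congr rfl fun n hn => ?_
    obtain ⟨hn1, hnx⟩ := mem_Ioc.mp hn
    have hle : (n : ℝ) / x ≤ 1 := (div_le_one hx).mpr ((Nat.le_floor_iff hx.le).mp hnx)
    rw [integral_term_mul_tentMellin hx hσ (by omega), max_eq_left (by linarith)]
    push_cast
    rfl
  · intro n hn
    rcases eq_or_ne n 0 with rfl | hn0
    · simp
    · have hlt : x < n := (Nat.floor_lt hx.le).mp <| by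
        by_contra! h
        exact hn (mem_Ioc.mpr ⟨by omega, h⟩)
      have hle : 1 ≤ (n : ℝ) / x := (one_le_div hx).mpr hlt.le
      rw [integral_term_mul_tentMellin hx hσ hn0, max_eq_right (by linarith),
        Complex.ofReal_zero, mul_zero]

lemma exists_norm_sum_mul_one_sub_div_le {θ : ℝ} (hθ : θ < 1) :
    ∃ K > 0, ∀ (a : ℕ → ℂ) (x σ C : ℝ), 0 < x → 1 ≤ σ → LSeriesSummable a σ →
      (∀ y : ℝ, ‖LSeries a (σ + y * Complex.I)‖ ≤ C * (1 + |y|) ^ θ) →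
      ‖∑ n ∈ Ioc 0 ⌊x⌋₊, a n * (1 - n / x)‖ ≤ K * C * x ^ σ := by
  set I : ℝ := ∫ y : ℝ, (1 + |y|) ^ (θ - 2)
  have : 0 ≤ I := integral_nonneg fun y => by positivity
  refine ⟨2 * (I + 1), by positivity, fun a x σ C hx hσ ha hC => ?_⟩
  have hC0 : 0 ≤ C := by simpa using (norm_nonneg _).trans (hC 0)
  have hbound (y : ℝ) : ‖LSeries a (σ + y * Complex.I) *
      ((x : ℂ) ^ (σ + y * Complex.I) * tentMellin (σ + y * Complex.I))‖ ≤
      2 * C * x ^ σ * (1 + |y|) ^ (θ - 2) := by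
    have hre : (σ + y * Complex.I : ℂ).re = σ := by simp
    rw [norm_mul, norm_mul, Complex.norm_cpow_eq_rpow_re_of_pos hx, hre]
    calc _ ≤ C * (1 + |y|) ^ θ * (x ^ σ * (2 * (1 + |y|) ^ (-2 : ℝ))) := by
          gcongr
          · exact hC y
          · exact norm_tentMellin_le hσ y
      _ = 2 * C * x ^ σ * (1 + |y|) ^ (θ - 2) := by
          rw [sub_eq_add_neg, Real.rpow_add (by positivity)]
          ring
  have hpi : ‖(1 / (2 * π) : ℝ)‖ ≤ 1 := by
    rw [Real.norm_of_nonneg (by positivity), div_le_one (by positivity)]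
    linarith [Real.pi_gt_three]
  rw [sum_mul_one_sub_div_eq_integral hx hσ ha, norm_smul]
  calc _ ≤ 1 * ∫ y : ℝ, 2 * C * x ^ σ * (1 + |y|) ^ (θ - 2) := by
        gcongr
        exact norm_integral_le_of_norm_le
          ((integrable_one_add_abs_rpow (by linarith)).const_mul _) (.of_forall hbound)
    _ = 2 * I * C * x ^ σ := by
        rw [integral_const_mul]
        ring
    _ ≤ 2 * (I + 1) * C * x ^ σ := by
        gcongr
        linarith

end Perron

section SmoothedMertens

lemma exists_norm_LSeries_logMul_moebius_le (j : ℕ) {ε : ℝ} (hε : 0 < ε) (hε1 : ε ≤ 1) :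
    ∃ C > 0, ∀ s : ℂ, 1 < s.re → s.re ≤ 2 →
      ‖LSeries (LSeries.logMul^[j] fun n => ((moebius n : ℤ) : ℂ)) s‖ ≤ C * (1 + |s.im|) ^ ε := by
  obtain ⟨C, hC, hζ⟩ := exists_norm_iteratedDeriv_inv_riemannZeta_le j hε hε1
  refine ⟨C, hC, fun s hs hs2 => ?_⟩
  have hderiv := LSeries_iteratedDeriv (f := fun n => ((moebius n : ℤ) : ℂ)) j (s := s)
    (by rw [abscissaOfAbsConv_moebius]; exact_mod_cast hs)
  have hinv : (LSeries fun n => ((moebius n : ℤ) : ℂ)) =ᶠ[nhds s]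
      fun s => (riemannZeta s)⁻¹ := by
    filter_upwards [(isOpen_lt continuous_const Complex.continuous_re).mem_nhds hs] with z hz
    have := LSeries_zeta_mul_Lseries_moebius hz
    rw [LSeries_zeta_eq_riemannZeta hz] at this
    exact eq_inv_of_mul_eq_one_right this
  have := hζ s hs hs2
  rwa [← hinv.iteratedDeriv_eq j, hderiv, norm_mul, norm_pow, norm_neg, norm_one, one_pow,
    one_mul] at this

lemma logMul_iterate_apply (f : ℕ → ℂ) (j n : ℕ) :
    (LSeries.logMul^[j] f) n = ((Real.log n ^ j : ℝ) : ℂ) * f n := by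
  induction j with
  | zero => simp
  | succ j ih =>
    rw [Function.iterate_succ_apply', LSeries.logMul, ih, ← Complex.natCast_log]
    push_cast
    ring

/-- Shift to the line `re s = 1 + 1 / (1 + log x)`, where `x ^ s ≪ x`. -/
lemma exists_abs_sum_moebius_mul_log_pow_mul_sub_le (j : ℕ) :
    ∃ C > 0, ∀ x : ℝ, 1 ≤ x →
      |∑ n ∈ Ioc 0 ⌊x⌋₊, (moebius n : ℝ) * Real.log n ^ j * (x - n)| ≤ C * x ^ 2 := by
  obtain ⟨K, hK, hperron⟩ := exists_norm_sum_mul_one_sub_div_le (θ := 1 / 2) (by norm_num)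
  obtain ⟨C, hC, hL⟩ :=
    exists_norm_LSeries_logMul_moebius_le j (ε := 1 / 2) (by norm_num) (by norm_num)
  refine ⟨K * C * Real.exp 1, by positivity, fun x hx => ?_⟩
  have hx0 : 0 < x := by linarith
  have hlog : 0 ≤ Real.log x := Real.log_nonneg hx
  set σ := 1 + 1 / (1 + Real.log x) with hσ
  have hσ1 : 1 < σ := lt_add_of_pos_right _ (by positivity)
  have hσ2 : σ ≤ 2 := by
    have : 1 / (1 + Real.log x) ≤ 1 := (div_le_one (by linarith)).mpr (by linarith)
    linarith
  have hsummable :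
      LSeriesSummable (LSeries.logMul^[j] fun n => ((moebius n : ℤ) : ℂ)) σ := by
    apply LSeriesSummable_of_abscissaOfAbsConv_lt_re
    rw [LSeries.absicssaOfAbsConv_logPowMul, abscissaOfAbsConv_moebius]
    exact_mod_cast hσ1
  have hbound := hperron _ x σ C hx0 hσ1.le hsummable fun y => by
    simpa using hL (σ + y * Complex.I) (by simpa using hσ1) (by simpa using hσ2)
  have hpow : x ^ σ ≤ x * Real.exp 1 := by
    rw [hσ, Real.rpow_add hx0, Real.rpow_one, Real.rpow_def_of_pos hx0]
    gcongr
    rw [mul_one_div]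
    exact (div_le_one (by linarith)).mpr (by linarith)
  have hcast : ∑ n ∈ Ioc 0 ⌊x⌋₊,
      (LSeries.logMul^[j] fun n => ((moebius n : ℤ) : ℂ)) n * (1 - n / x) =
      (((∑ n ∈ Ioc 0 ⌊x⌋₊, (moebius n : ℝ) * Real.log n ^ j * (x - n)) / x : ℝ) : ℂ) := by
    rw [sum_div]
    push_cast
    refine sum_congr rfl fun n _ => ?_
    have : (x : ℂ) ≠ 0 := by exact_mod_cast hx0.ne'
    rw [logMul_iterate_apply]
    push_cast
    field_simp
  rw [hcast, Complex.norm_real, Real.norm_eq_abs, abs_div, abs_of_pos hx0,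
    div_le_iff₀ hx0] at hbound
  calc
    _ ≤ K * C * x ^ σ * x := hbound
    _ ≤ K * C * (x * Real.exp 1) * x := by gcongr
    _ = K * C * Real.exp 1 * x ^ 2 := by ring

end SmoothedMertens

/-! ### Mertens sums with a log-power saving -/

lemma abs_moebius_cast_le_one (n : ℕ) : |(moebius n : ℝ)| ≤ 1 := by
  exact_mod_cast abs_moebius_le_one (n := n)

lemma exists_one_add_log_pow_le (B : ℕ) {ε : ℝ} (hε : 0 < ε) :
    ∃ C > 0, ∀ x : ℝ, 1 ≤ x → (1 + Real.log x) ^ B ≤ C * x ^ ε := by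
  set δ := ε / (B + 1) with hδ
  have hδ0 : 0 < δ := by positivity
  refine ⟨(1 + 1 / δ) ^ B, by positivity, fun x hx => ?_⟩
  have hlog : 0 ≤ Real.log x := Real.log_nonneg hx
  have hle : 1 + Real.log x ≤ (1 + 1 / δ) * x ^ δ := by
    calc 1 + Real.log x ≤ x ^ δ + x ^ δ / δ :=
          add_le_add (Real.one_le_rpow hx hδ0.le) (Real.log_le_rpow_div (by linarith) hδ0)
      _ = (1 + 1 / δ) * x ^ δ := by ring
  have hexp : δ * B ≤ ε := by
    rw [hδ, div_mul_eq_mul_div, div_le_iff₀ (by positivity)]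
    nlinarith
  calc (1 + Real.log x) ^ B ≤ ((1 + 1 / δ) * x ^ δ) ^ B := by gcongr
    _ = (1 + 1 / δ) ^ B * x ^ (δ * B) := by rw [mul_pow, Real.rpow_mul_natCast (by linarith)]
    _ ≤ (1 + 1 / δ) ^ B * x ^ ε := by gcongr

lemma card_Ioc_floor_floor_le {x y : ℝ} (hx : 0 ≤ x) (hxy : x ≤ y) :
    ((Ioc ⌊x⌋₊ ⌊y⌋₊).card : ℝ) ≤ y - x + 1 := by
  rw [Nat.card_Ioc, Nat.cast_sub (Nat.floor_le_floor hxy)]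
  linarith [Nat.floor_le (hx.trans hxy), Nat.lt_floor_add_one x]

/-- `h * ∑_{n ≤ x} a n` is the difference of the smoothed sums at `x + h` and at `x`, up to the
terms with `x < n ≤ x + h`. -/
lemma abs_sum_le_of_abs_sum_mul_sub_le {a : ℕ → ℝ} {x h A M : ℝ} (hx : 0 ≤ x) (hh : 0 < h)
    (hM : 0 ≤ M) (ha : ∀ n ∈ Ioc ⌊x⌋₊ ⌊x + h⌋₊, |a n| ≤ M)
    (hsmooth : ∀ y ∈ ({x, x + h} : Set ℝ), |∑ n ∈ Ioc 0 ⌊y⌋₊, a n * (y - n)| ≤ A) :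
    |∑ n ∈ Ioc 0 ⌊x⌋₊, a n| ≤ 2 * A / h + M * (h + 1) := by
  have hx1 := hsmooth x (by simp)
  have hx2 := hsmooth (x + h) (by simp)
  have hfloor : ⌊x⌋₊ ≤ ⌊x + h⌋₊ := Nat.floor_le_floor (by linarith)
  have htail : |∑ n ∈ Ioc ⌊x⌋₊ ⌊x + h⌋₊, a n * (x + h - n)| ≤ (h + 1) * (M * h) := by
    have hterm (n : ℕ) (hn : n ∈ Ioc ⌊x⌋₊ ⌊x + h⌋₊) : |a n * (x + h - n)| ≤ M * h := by
      have hxn : x < n := (Nat.floor_lt hx).mp (mem_Ioc.mp hn).1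
      have hnx : (n : ℝ) ≤ x + h := (Nat.le_floor_iff (by linarith)).mp (mem_Ioc.mp hn).2
      rw [abs_mul, abs_of_nonneg (by linarith : 0 ≤ x + h - n)]
      gcongr
      · exact ha n hn
      · linarith
    calc
      _ ≤ ∑ n ∈ Ioc ⌊x⌋₊ ⌊x + h⌋₊, |a n * (x + h - n)| := abs_sum_le_sum_abs _ _
      _ ≤ ((Ioc ⌊x⌋₊ ⌊x + h⌋₊).card : ℝ) * (M * h) := by
        simpa using sum_le_card_nsmul _ _ _ hterm
      _ ≤ (h + 1) * (M * h) := by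
        gcongr
        simpa using card_Ioc_floor_floor_le hx (by linarith : x ≤ x + h)
  have hdiff : ∑ n ∈ Ioc 0 ⌊x + h⌋₊, a n * (x + h - n) =
      ∑ n ∈ Ioc 0 ⌊x⌋₊, a n * (x - n) + h * ∑ n ∈ Ioc 0 ⌊x⌋₊, a n +
        ∑ n ∈ Ioc ⌊x⌋₊ ⌊x + h⌋₊, a n * (x + h - n) := by
    rw [← sum_Ioc_consecutive _ (Nat.zero_le _) hfloor, mul_sum, ← sum_add_distrib]
    congr 1
    exact sum_congr rfl fun n _ => by ring
  rw [hdiff] at hx2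
  have hmul : |h * ∑ n ∈ Ioc 0 ⌊x⌋₊, a n| ≤ 2 * A + (h + 1) * (M * h) := by
    rw [abs_le] at *
    constructor <;> linarith
  rw [abs_mul, abs_of_pos hh] at hmul
  rw [← mul_le_mul_iff_right₀ hh]
  refine hmul.trans_eq ?_
  field_simp

lemma abs_moebius_mul_log_pow_le {x : ℝ} (hx : 1 ≤ x) {n : ℕ} (hn0 : (0 : ℝ) < n)
    (hn : (n : ℝ) ≤ 2 * x) (j : ℕ) :
    |(moebius n : ℝ) * Real.log n ^ j| ≤ (1 + Real.log x) ^ j := by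
  have hlog : Real.log n ≤ 1 + Real.log x := by
    have := Real.log_le_log hn0 hn
    rw [Real.log_mul two_ne_zero (by linarith)] at this
    linarith [Real.log_two_lt_d9]
  have hlog0 := Real.log_natCast_nonneg n
  rw [abs_mul, abs_of_nonneg (pow_nonneg hlog0 _), ← one_mul ((1 + Real.log x) ^ j)]
  gcongr
  exact abs_moebius_cast_le_one n

lemma exists_abs_sum_moebius_mul_log_pow_le (B : ℕ) : ∃ C > 0, ∀ x : ℝ, 1 ≤ x →
    |∑ n ∈ Ioc 0 ⌊x⌋₊, (moebius n : ℝ) * Real.log n ^ (2 * B)| ≤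
      C * x * (1 + Real.log x) ^ B := by
  obtain ⟨C, hC, hsmooth⟩ := exists_abs_sum_moebius_mul_log_pow_mul_sub_le (2 * B)
  obtain ⟨D, hD, hpow⟩ := exists_one_add_log_pow_le B one_pos
  refine ⟨8 * C + 1 + D, by positivity, fun x hx => ?_⟩
  have hx0 : 0 < x := by linarith
  set l := 1 + Real.log x with hl
  have hl1 : 1 ≤ l := by linarith [Real.log_nonneg hx]
  set h := x / l ^ B with hh
  have hh0 : 0 < h := by positivity
  have hhx : h ≤ x := div_le_self hx0.le (one_le_pow₀ hl1)
  have hDh : 1 ≤ D * h := by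
    rw [hh, ← mul_div_assoc, one_le_div (by positivity)]
    simpa using hpow x hx
  have hterm (n : ℕ) (hn : n ∈ Ioc ⌊x⌋₊ ⌊x + h⌋₊) :
      |(moebius n : ℝ) * Real.log n ^ (2 * B)| ≤ l ^ (2 * B) := by
    have hn0 : 0 < n := Nat.zero_lt_of_lt (mem_Ioc.mp hn).1
    refine abs_moebius_mul_log_pow_le hx (by exact_mod_cast hn0) ?_ _
    linarith [(Nat.le_floor_iff (by linarith : 0 ≤ x + h)).mp (mem_Ioc.mp hn).2]
  have hbound := abs_sum_le_of_abs_sum_mul_sub_le (A := 4 * C * x ^ 2) hx0.le hh0 (by positivity)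
    hterm (by
      rintro y (rfl | rfl)
      · exact (hsmooth y hx).trans (by nlinarith)
      · calc
          _ ≤ C * (x + h) ^ 2 := hsmooth _ (by linarith)
          _ ≤ C * (x + x) ^ 2 := by gcongr
          _ = 4 * C * x ^ 2 := by ring)
  have hxh : x = h * l ^ B := by rw [hh, div_mul_cancel₀ _ (by positivity)]
  calc
    _ ≤ 2 * (4 * C * x ^ 2) / h + l ^ (2 * B) * (h + 1) := hbound
    _ ≤ 2 * (4 * C * x ^ 2) / h + l ^ (2 * B) * (h + D * h) := by gcongr
    _ = (8 * C + 1 + D) * (h * l ^ B) * l ^ B := by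
      nth_rw 1 [hxh]
      field_simp
      ring
    _ = (8 * C + 1 + D) * x * l ^ B := by rw [← hxh]

lemma abs_sum_Ioc_mul_le_of_antitoneOn {a w : ℕ → ℝ} {K N : ℕ} {R : ℝ}
    (hw : ∀ n, K < n → 0 ≤ w n) (hanti : AntitoneOn w (Set.Ioi K)) (hKN : K ≤ N)
    (hR : ∀ m ≤ N, |∑ n ∈ Ioc K m, a n| ≤ R) :
    |∑ n ∈ Ioc K N, a n * w n| ≤ R * w (K + 1) := by
  have hR0 : 0 ≤ R := (abs_nonneg _).trans (hR N le_rfl)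
  rcases hKN.eq_or_lt with rfl | hlt
  · simpa using mul_nonneg hR0 (hw _ K.lt_succ_self)
  have habel (m : ℕ) (hm : K + 1 ≤ m) : m ≤ N →
      |∑ n ∈ Ioc K m, a n * w n - w m * ∑ n ∈ Ioc K m, a n| ≤ R * (w (K + 1) - w m) := by
    induction m, hm using Nat.le_induction with
    | base => simp [mul_comm]
    | succ m hm ih =>
      intro hmN
      have hstep : |(w m - w (m + 1)) * ∑ n ∈ Ioc K m, a n| ≤ (w m - w (m + 1)) * R := by
        have := hanti (by simpa using hm) (by simpa using hm.trans m.le_succ) m.le_succ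
        rw [abs_mul, abs_of_nonneg (sub_nonneg.mpr this)]
        exact mul_le_mul_of_nonneg_left (hR m (by omega)) (sub_nonneg.mpr this)
      have hm' := ih (by omega)
      rw [sum_Ioc_succ_top (by omega), sum_Ioc_succ_top (by omega)]
      rw [abs_le] at *
      constructor <;> linarith
  have hN := habel N hlt le_rfl
  have hlast : |w N * ∑ n ∈ Ioc K N, a n| ≤ w N * R := by
    rw [abs_mul, abs_of_nonneg (hw N hlt)]
    exact mul_le_mul_of_nonneg_left (hR N le_rfl) (hw N hlt)
  rw [abs_le] at *
  constructor <;> linarith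

lemma abs_sum_Ioc_le_two_mul {a : ℕ → ℝ} {K N : ℕ} {R : ℝ} (hKN : K ≤ N)
    (hR : ∀ m ≤ N, |∑ n ∈ Ioc 0 m, a n| ≤ R) : |∑ n ∈ Ioc K N, a n| ≤ 2 * R := by
  rw [← sub_eq_of_eq_add' (sum_Ioc_consecutive a (Nat.zero_le K) hKN).symm]
  exact (abs_sub _ _).trans (by linarith [hR N le_rfl, hR K hKN])

lemma one_add_log_le_four_mul_log {x : ℝ} (hx : 1 ≤ x) {n : ℕ} (hn : √x < n) :
    1 + Real.log x ≤ 4 * Real.log n := by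
  have hn2 : (2 : ℝ) ≤ n := by
    have : (1 : ℝ) < n := (Real.one_le_sqrt.mpr hx).trans_lt hn
    exact_mod_cast this
  have hlog2 := Real.log_le_log two_pos hn2
  have hlogx : Real.log x / 2 ≤ Real.log n := by
    rw [← Real.log_sqrt (by linarith)]
    exact Real.log_le_log (Real.sqrt_pos.mpr (by linarith)) hn.le
  linarith [Real.log_two_gt_d9]

lemma exists_forall_le_abs_sum_moebius_mul_log_pow_le (B : ℕ) : ∃ C > 0, ∀ x : ℝ, 1 ≤ x →
    ∀ m ≤ ⌊x⌋₊, |∑ n ∈ Ioc 0 m, (moebius n : ℝ) * Real.log n ^ (2 * B)| ≤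
      C * x * (1 + Real.log x) ^ B := by
  obtain ⟨C, hC, hsum⟩ := exists_abs_sum_moebius_mul_log_pow_le B
  refine ⟨C, hC, fun x hx m hm => ?_⟩
  rcases m.eq_zero_or_pos with rfl | hm0
  · have := Real.log_nonneg hx
    simp only [Ioc_self, sum_empty, abs_zero]
    positivity
  · have hm1 : (1 : ℝ) ≤ m := by exact_mod_cast hm0
    have hmx : (m : ℝ) ≤ x := (Nat.le_floor_iff (by linarith)).mp hm
    have := Real.log_nonneg hm1
    calc
      _ ≤ C * m * (1 + Real.log m) ^ B := by simpa using hsum m hm1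
      _ ≤ C * x * (1 + Real.log x) ^ B := by gcongr

lemma exists_abs_sum_Ioc_floor_sqrt_moebius_le (B : ℕ) : ∃ C > 0, ∀ x : ℝ, 1 ≤ x →
    |∑ n ∈ Ioc ⌊√x⌋₊ ⌊x⌋₊, (moebius n : ℝ)| ≤ C * (x / (1 + Real.log x) ^ B) := by
  obtain ⟨C, hC, hpartial⟩ := exists_forall_le_abs_sum_moebius_mul_log_pow_le B
  refine ⟨2 * C * 4 ^ (2 * B), by positivity, fun x hx => ?_⟩
  set l := 1 + Real.log x
  have hl1 : 1 ≤ l := by linarith [Real.log_nonneg hx]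
  have hlog (n : ℕ) (hn : ⌊√x⌋₊ < n) : l / 4 ≤ Real.log n := by
    linarith [one_add_log_le_four_mul_log hx (Nat.lt_of_floor_lt hn)]
  have hlog0 (n : ℕ) (hn : ⌊√x⌋₊ < n) : 0 < Real.log n := by linarith [hlog n hn]
  have hfloor : ⌊√x⌋₊ ≤ ⌊x⌋₊ := Nat.floor_le_floor (Real.sqrt_le_self_iff.mpr (.inr hx))
  have habel := abs_sum_Ioc_mul_le_of_antitoneOn
    (w := fun n => (Real.log n ^ (2 * B))⁻¹) (fun n _ => by positivity)
    (fun m hm n _ hmn => by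
      have hm' : ⌊√x⌋₊ < m := hm
      have := hlog0 m hm'
      have hm0 : (0 : ℝ) < m := by exact_mod_cast (by omega : 0 < m)
      dsimp only
      gcongr) hfloor
    (fun m hm => (le_total ⌊√x⌋₊ m).elim
      (fun h => abs_sum_Ioc_le_two_mul h fun i hi =>
        hpartial x hx i (hi.trans hm))
      (fun h => by
        rw [Ioc_eq_empty_of_le h, sum_empty, abs_zero]
        positivity))
  calc
    _ = |∑ n ∈ Ioc ⌊√x⌋₊ ⌊x⌋₊,
          (moebius n : ℝ) * Real.log n ^ (2 * B) * (Real.log n ^ (2 * B))⁻¹| := by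
      refine congrArg _ (sum_congr rfl fun n hn => ?_)
      have := hlog0 n (mem_Ioc.mp hn).1
      rw [mul_inv_cancel_right₀ (by positivity)]
    _ ≤ 2 * (C * x * l ^ B) * (Real.log ((⌊√x⌋₊ + 1 : ℕ) : ℝ) ^ (2 * B))⁻¹ := habel
    _ ≤ 2 * (C * x * l ^ B) * ((l / 4) ^ (2 * B))⁻¹ := by
      have := hlog _ (Nat.lt_succ_self _)
      gcongr
    _ = 2 * C * 4 ^ (2 * B) * (x / l ^ B) := by
      rw [div_pow, two_mul B, pow_add l]
      field_simp

lemma exists_abs_sum_moebius_le (B : ℕ) : ∃ C > 0, ∀ x : ℝ, 1 ≤ x →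
    |∑ n ∈ Ioc 0 ⌊x⌋₊, (moebius n : ℝ)| ≤ C * (x / (1 + Real.log x) ^ B) := by
  obtain ⟨C, hC, hlong⟩ := exists_abs_sum_Ioc_floor_sqrt_moebius_le B
  obtain ⟨D, hD, hpow⟩ := exists_one_add_log_pow_le B one_half_pos
  refine ⟨D + C, by positivity, fun x hx => ?_⟩
  have hl : 0 < 1 + Real.log x := by linarith [Real.log_nonneg hx]
  have hshort : |∑ n ∈ Ioc 0 ⌊√x⌋₊, (moebius n : ℝ)| ≤ D * (x / (1 + Real.log x) ^ B) := by
    calc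
      _ ≤ ∑ n ∈ Ioc 0 ⌊√x⌋₊, |(moebius n : ℝ)| := abs_sum_le_sum_abs _ _
      _ ≤ ∑ _ ∈ Ioc 0 ⌊√x⌋₊, (1 : ℝ) := sum_le_sum fun n _ => abs_moebius_cast_le_one n
      _ ≤ √x := by simpa using Nat.floor_le (Real.sqrt_nonneg x)
      _ ≤ D * (x / (1 + Real.log x) ^ B) := by
        rw [mul_div_assoc', le_div_iff₀ (by positivity)]
        calc √x * (1 + Real.log x) ^ B ≤ √x * (D * √x) := by
              gcongr
              rw [Real.sqrt_eq_rpow]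
              exact hpow x hx
          _ = D * x := by
            rw [mul_left_comm, Real.mul_self_sqrt (by linarith)]
  have hfloor : ⌊√x⌋₊ ≤ ⌊x⌋₊ := Nat.floor_le_floor (Real.sqrt_le_self_iff.mpr (.inr hx))
  rw [← sum_Ioc_consecutive _ (Nat.zero_le _) hfloor, add_mul]
  exact (abs_add_le _ _).trans (add_le_add hshort (hlong x hx))

/-! ### Möbius sums over integers with restricted prime factors -/

open Classical in
/-- The indicator function of the positive integers all of whose prime factors satisfy `P`.
The choices `p < ·` and `· ≤ p` give the `p`-rough and the `p`-smooth integers. -/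
noncomputable def suppIndicator (P : ℕ → Prop) : ArithmeticFunction ℝ :=
  ⟨fun n => if n ≠ 0 ∧ ∀ q ∈ n.primeFactors, P q then 1 else 0, by simp⟩

/-- The Möbius function restricted to the integers all of whose prime factors satisfy `P`. -/
noncomputable def suppMoebius (P : ℕ → Prop) : ArithmeticFunction ℝ :=
  (moebius : ArithmeticFunction ℝ).pmul (suppIndicator P)

/-- The Mertens function `∑_{m ≤ N} μ(m)`, restricted to the integers `m` all of whose prime
factors satisfy `P`. -/
noncomputable def suppMertens (P : ℕ → Prop) (N : ℕ) : ℝ :=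
  ∑ m ∈ Ioc 0 N, suppMoebius P m

section SuppIndicator

variable (P Q : ℕ → Prop)

open Classical in
lemma suppIndicator_apply (n : ℕ) :
    suppIndicator P n = if n ≠ 0 ∧ ∀ q ∈ n.primeFactors, P q then 1 else 0 :=
  rfl

lemma suppIndicator_nonneg (n : ℕ) : 0 ≤ suppIndicator P n := by
  rw [suppIndicator_apply]
  positivity

lemma suppIndicator_le_one (n : ℕ) : suppIndicator P n ≤ 1 := by
  rw [suppIndicator_apply]
  split_ifs <;> norm_num

variable {P Q} in
lemma suppIndicator_eq_one {n : ℕ} (hn : n ≠ 0) (h : ∀ q ∈ n.primeFactors, P q) :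
    suppIndicator P n = 1 :=
  if_pos ⟨hn, h⟩

variable {P Q} in
lemma suppIndicator_eq_zero {n q : ℕ} (hq : q ∈ n.primeFactors) (h : ¬ P q) :
    suppIndicator P n = 0 :=
  if_neg fun hn => h (hn.2 q hq)

lemma suppIndicator_one : suppIndicator P 1 = 1 := by
  simp [suppIndicator_apply]

lemma suppIndicator_mul {m n : ℕ} (hm : m ≠ 0) (hn : n ≠ 0) :
    suppIndicator P (m * n) = suppIndicator P m * suppIndicator P n := by
  have hiff : (∀ q ∈ (m * n).primeFactors, P q) ↔
      (∀ q ∈ m.primeFactors, P q) ∧ ∀ q ∈ n.primeFactors, P q := by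
    rw [Nat.primeFactors_mul hm hn, forall_mem_union]
  simp only [suppIndicator_apply, hiff]
  split_ifs <;> simp_all

lemma isMultiplicative_suppIndicator : (suppIndicator P).IsMultiplicative :=
  IsMultiplicative.iff_ne_zero.mpr
    ⟨suppIndicator_one P, fun hm hn _ => suppIndicator_mul P hm hn⟩

open Classical in
lemma suppIndicator_prime_pow {q : ℕ} (hq : q.Prime) (i : ℕ) :
    suppIndicator P (q ^ i) = if i = 0 ∨ P q then 1 else 0 := by
  rcases eq_or_ne i 0 with rfl | hi
  · simp [suppIndicator_one]
  · simp [suppIndicator_apply, Nat.primeFactors_prime_pow hi hq, hi, hq.ne_zero]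

lemma suppIndicator_true {n : ℕ} (hn : n ≠ 0) : suppIndicator (fun _ => True) n = 1 :=
  suppIndicator_eq_one hn fun _ _ => trivial

lemma suppIndicator_and_ne {q n : ℕ} (hq : q.Prime) :
    suppIndicator (fun r => P r ∧ r ≠ q) n = if q ∣ n then 0 else suppIndicator P n := by
  rcases eq_or_ne n 0 with rfl | hn
  · simp
  have hiff : (∀ r ∈ n.primeFactors, P r ∧ r ≠ q) ↔ (∀ r ∈ n.primeFactors, P r) ∧ ¬ q ∣ n := by
    rw [forall₂_and]
    refine and_congr_right fun _ => ⟨fun h hd => h q (by simp [*]) rfl, ?_⟩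
    rintro h r hr rfl
    exact h (Nat.dvd_of_mem_primeFactors hr)
  simp only [suppIndicator_apply, hiff]
  split_ifs <;> simp_all

end SuppIndicator

section SuppMoebius

variable (P Q : ℕ → Prop)

lemma suppMoebius_apply (n : ℕ) : suppMoebius P n = (moebius n : ℝ) * suppIndicator P n :=
  rfl

lemma isMultiplicative_suppMoebius : (suppMoebius P).IsMultiplicative :=
  isMultiplicative_moebius.intCast.pmul (isMultiplicative_suppIndicator P)

lemma abs_suppMoebius_le (n : ℕ) : |suppMoebius P n| ≤ suppIndicator P n := by
  rw [suppMoebius_apply, abs_mul, abs_of_nonneg (suppIndicator_nonneg P n)]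
  exact mul_le_of_le_one_left (suppIndicator_nonneg P n) (abs_moebius_cast_le_one n)

open Classical in
lemma suppMoebius_prime_pow_succ {q : ℕ} (hq : q.Prime) (i : ℕ) :
    suppMoebius P (q ^ (i + 1)) = if i = 0 ∧ P q then -1 else 0 := by
  rw [suppMoebius_apply, suppIndicator_prime_pow P hq, moebius_apply_prime_pow hq i.succ_ne_zero]
  by_cases hi : i = 0 <;> by_cases hP : P q <;> simp [hi, hP]

lemma suppMoebius_mul_apply_prime_pow_succ (f : ArithmeticFunction ℝ) {q : ℕ} (hq : q.Prime)
    (i : ℕ) :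
    (suppMoebius P * f) (q ^ (i + 1)) = f (q ^ (i + 1)) + suppMoebius P q * f (q ^ i) := by
  have := suppMoebius_prime_pow_succ P hq 0
  have hsq (k : ℕ) : suppMoebius P (q ^ (k + 1 + 1)) = 0 := by
    simp [suppMoebius_prime_pow_succ P hq]
  have hdiv : q ^ (i + 1) / q = q ^ i := by rw [pow_succ, Nat.mul_div_cancel _ hq.pos]
  rw [mul_apply, Nat.sum_divisorsAntidiagonal fun a b => suppMoebius P a * f b,
    Nat.sum_divisors_prime_pow hq, sum_range_succ', sum_range_succ']
  simp only [hsq, zero_mul, sum_const_zero, zero_add, pow_zero, pow_one, Nat.div_one, hdiv,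
    (isMultiplicative_suppMoebius P).map_one, one_mul]
  exact add_comm _ _

lemma suppMoebius_mul_suppIndicator :
    suppMoebius P * suppIndicator (fun q => P q ∧ Q q) = suppMoebius fun q => P q ∧ ¬ Q q := by
  classical
  refine (IsMultiplicative.eq_iff_eq_on_prime_powers _
    ((isMultiplicative_suppMoebius P).mul (isMultiplicative_suppIndicator _)) _
    (isMultiplicative_suppMoebius _)).mpr fun q i hq => ?_
  rcases i with _ | i
  · simp [(isMultiplicative_suppMoebius _).map_one, suppIndicator_one]
  · have hq1 := suppMoebius_prime_pow_succ P hq 0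
    rw [zero_add, pow_one] at hq1
    simp only [suppMoebius_mul_apply_prime_pow_succ P _ hq, suppIndicator_prime_pow _ hq,
      suppMoebius_prime_pow_succ _ hq, hq1]
    by_cases hP : P q <;> by_cases hQ : Q q <;> simp [hP, hQ]

lemma suppMertens_and_not (N : ℕ) :
    suppMertens (fun q => P q ∧ ¬ Q q) N =
      ∑ d ∈ Ioc 0 N, suppIndicator (fun q => P q ∧ Q q) d * suppMertens P (N / d) := by
  simp only [suppMertens]
  rw [← suppMoebius_mul_suppIndicator, mul_comm, sum_Ioc_mul_eq_sum_sum]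

lemma abs_suppMertens_le (N : ℕ) : |suppMertens P N| ≤ ∑ m ∈ Ioc 0 N, suppIndicator P m :=
  (abs_sum_le_sum_abs _ _).trans (sum_le_sum fun m _ => abs_suppMoebius_le P m)

lemma suppMertens_true (N : ℕ) :
    suppMertens (fun _ => True) N = ∑ n ∈ Ioc 0 N, (moebius n : ℝ) :=
  sum_congr rfl fun n hn => by
    rw [suppMoebius_apply, suppIndicator_true (mem_Ioc.mp hn).1.ne', mul_one]

lemma suppMertens_lt_eq_sum (p N : ℕ) :
    suppMertens (p < ·) N =
      ∑ d ∈ Ioc 0 N, suppIndicator (· ≤ p) d * suppMertens (fun _ => True) (N / d) := by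
  simpa using suppMertens_and_not (fun _ => True) (· ≤ p) N

end SuppMoebius

/-! ### Weighting by the number of prime factors -/

/-- The indicator function of the positive integers with at most one prime factor, that is, of `1`
and of the prime powers. -/
noncomputable def primaryIndicator (n : ℕ) : ℝ := if n = 1 ∨ IsPrimePow n then 1 else 0

lemma primaryIndicator_nonneg (n : ℕ) : 0 ≤ primaryIndicator n := by
  rw [primaryIndicator]
  positivity

lemma suppMoebius_mul_card_primeFactors (P : ℕ → Prop) {m N : ℕ} (hm : m ∈ Ioc 0 N) :
    suppMoebius P m * m.primeFactors.card =
      ∑ q ∈ N.primesLE, (suppMoebius P m - suppMoebius (fun r => P r ∧ r ≠ q) m) := by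
  obtain ⟨hm0, hmN⟩ := mem_Ioc.mp hm
  have hterm (q : ℕ) (hq : q ∈ N.primesLE) :
      suppMoebius P m - suppMoebius (fun r => P r ∧ r ≠ q) m =
        if q ∣ m then suppMoebius P m else 0 := by
    rw [suppMoebius_apply, suppMoebius_apply,
      suppIndicator_and_ne P (Nat.prime_of_mem_primesLE hq)]
    split_ifs <;> simp
  have hfilter : {q ∈ N.primesLE | q ∣ m} = m.primeFactors := by
    ext q
    simp only [mem_filter, Nat.mem_primesLE, Nat.mem_primeFactors]
    exact ⟨fun h => ⟨h.1.2, h.2, hm0.ne'⟩,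
      fun h => ⟨⟨(Nat.le_of_dvd hm0 h.2.1).trans hmN, h.1⟩, h.2.1⟩⟩
  rw [sum_congr rfl hterm, ← sum_filter, hfilter, sum_const, nsmul_eq_mul, mul_comm]

lemma sum_suppMoebius_mul_card_primeFactors (P : ℕ → Prop) {N : ℕ} (hN : 0 < N) :
    ∑ m ∈ Ioc 0 N, suppMoebius P m * m.primeFactors.card =
      -∑ d ∈ Ioc 1 N, (∑ q ∈ N.primesLE, suppIndicator (fun r => P r ∧ r = q) d) *
        suppMertens P (N / d) := by
  have hsplit (f : ℕ → ℝ) : ∑ d ∈ Ioc 0 N, f d = f 1 + ∑ d ∈ Ioc 1 N, f d :=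
    (add_sum_Ioc_eq_sum_Icc (f := f) (a := 1) (b := N) hN).symm
  have hprime (q : ℕ) :
      suppMertens P N - suppMertens (fun r => P r ∧ r ≠ q) N =
        -∑ d ∈ Ioc 1 N, suppIndicator (fun r => P r ∧ r = q) d * suppMertens P (N / d) := by
    rw [suppMertens_and_not, hsplit, suppIndicator_one, Nat.div_one]
    ring
  calc
    _ = ∑ q ∈ N.primesLE, (suppMertens P N - suppMertens (fun r => P r ∧ r ≠ q) N) := by
      rw [sum_congr rfl fun m hm => suppMoebius_mul_card_primeFactors P hm, sum_comm]
      simp only [sum_sub_distrib, suppMertens]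
    _ = _ := by
      simp only [hprime, sum_neg_distrib, sum_mul]
      rw [sum_comm]

lemma sum_suppIndicator_and_eq_le (P : ℕ → Prop) (S : Finset ℕ) {d : ℕ} (hd : 1 < d) :
    ∑ q ∈ S, suppIndicator (fun r => P r ∧ r = q) d ≤ primaryIndicator d := by
  have hsingleton (q : ℕ) : suppIndicator (fun r => P r ∧ r = q) d ≤
      if d.primeFactors = {q} then 1 else 0 := by
    split_ifs with h
    · exact suppIndicator_le_one _ d
    · have hd' := (Nat.nonempty_primeFactors.mpr hd).subset_singleton_iff (a := q)
      have : ¬ d.primeFactors ⊆ {q} := fun hsub => h (hd'.mp hsub)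
      obtain ⟨r, hr, hrq⟩ := not_subset.mp this
      exact (suppIndicator_eq_zero hr fun hPr => hrq (by simp [hPr.2])).le
  refine (sum_le_sum fun q _ => hsingleton q).trans ?_
  by_cases hpow : IsPrimePow d
  · obtain ⟨p, hp⟩ := card_eq_one.mp (isPrimePow_iff_card_primeFactors_eq_one.mp hpow)
    simp only [hp, singleton_inj, sum_ite_eq, primaryIndicator, hpow, or_true, if_true]
    split_ifs <;> norm_num
  · have (q : ℕ) : d.primeFactors ≠ {q} := fun h =>
      hpow (isPrimePow_iff_card_primeFactors_eq_one.mpr (by rw [h, card_singleton]))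
    simp [this, primaryIndicator_nonneg]

lemma abs_sum_suppMoebius_mul_one_add_card_primeFactors_le (P : ℕ → Prop) (N : ℕ) :
    |∑ m ∈ Ioc 0 N, suppMoebius P m * (1 + m.primeFactors.card)| ≤
      ∑ d ∈ Ioc 0 N, primaryIndicator d * |suppMertens P (N / d)| := by
  rcases N.eq_zero_or_pos with rfl | hN
  · simp
  have hsplit (f : ℕ → ℝ) : ∑ d ∈ Ioc 0 N, f d = f 1 + ∑ d ∈ Ioc 1 N, f d :=
    (add_sum_Ioc_eq_sum_Icc (f := f) (a := 1) (b := N) hN).symm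
  have htail : |∑ m ∈ Ioc 0 N, suppMoebius P m * m.primeFactors.card| ≤
      ∑ d ∈ Ioc 1 N, primaryIndicator d * |suppMertens P (N / d)| := by
    rw [sum_suppMoebius_mul_card_primeFactors P hN, abs_neg]
    refine (abs_sum_le_sum_abs _ _).trans (sum_le_sum fun d hd => ?_)
    rw [abs_mul, abs_of_nonneg (sum_nonneg fun q _ => suppIndicator_nonneg _ d)]
    gcongr
    exact sum_suppIndicator_and_eq_le P _ (mem_Ioc.mp hd).1
  calc
    _ = |suppMertens P N + ∑ m ∈ Ioc 0 N, suppMoebius P m * m.primeFactors.card| := by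
      simp only [mul_add, mul_one, sum_add_distrib, suppMertens]
    _ ≤ |suppMertens P N| + ∑ d ∈ Ioc 1 N, primaryIndicator d * |suppMertens P (N / d)| :=
      (abs_add_le _ _).trans (by gcongr)
    _ = _ := by
      rw [hsplit, Nat.div_one]
      simp [primaryIndicator]

/-! ### Counting prime powers -/

lemma primeCounting_floor_le {y : ℝ} (hy : 1 ≤ y) :
    (Nat.primeCounting ⌊y⌋₊ : ℝ) ≤ 11 * (y / (1 + Real.log y)) := by
  have hlog := Real.log_nonneg hy
  rcases lt_or_ge y 2 with hy2 | hy2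
  · have hfloor : ⌊y⌋₊ ≤ 1 := Nat.lt_succ_iff.mp ((Nat.floor_lt (by linarith)).mpr (by simpa))
    rw [Nat.primeCounting_eq_zero_iff.mpr hfloor, Nat.cast_zero]
    positivity
  have hlog2 : Real.log 2 ≤ Real.log y := Real.log_le_log two_pos hy2
  have hmain : Real.log 4 * y / Real.log √y ≤ 9 * (y / (1 + Real.log y)) := by
    have hlog4 : Real.log 4 = 2 * Real.log 2 := by
      rw [← Real.log_rpow two_pos]
      norm_num
    have : 2 * Real.log 2 * (1 + Real.log y) ≤ 9 * (Real.log y / 2) := by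
      nlinarith [Real.log_two_gt_d9, Real.log_two_lt_d9]
    rw [Real.log_sqrt (by linarith), hlog4, mul_div_assoc', div_le_div_iff₀ (by
      linarith [Real.log_two_gt_d9]) (by linarith)]
    nlinarith
  have hsqrt : √y ≤ 2 * (y / (1 + Real.log y)) := by
    have hlogsqrt := Real.log_le_sub_one_of_pos (Real.sqrt_pos.mpr (by linarith : 0 < y))
    rw [Real.log_sqrt (by linarith)] at hlogsqrt
    rw [mul_div_assoc', le_div_iff₀ (by linarith)]
    nlinarith [Real.sq_sqrt (by linarith : 0 ≤ y), Real.sqrt_nonneg y]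
  linarith [Chebyshev.pi_le_log4_mul_div (x := y) (by linarith)]

lemma card_isPrimePow_le {y : ℝ} (hy : 1 ≤ y) :
    (#{n ∈ Ioc 0 ⌊y⌋₊ | IsPrimePow n} : ℝ) ≤
      Nat.primeCounting ⌊y⌋₊ + 2 * Real.log y * √y := by
  have hlog := Real.log_nonneg hy
  set K := ⌊Real.log y / Real.log 2⌋₊
  have hK : (K : ℝ) ≤ 2 * Real.log y := by
    refine (Nat.floor_le (by positivity)).trans ?_
    rw [div_le_iff₀ (Real.log_pos one_lt_two)]
    nlinarith [Real.log_two_gt_d9]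
  have hprimes : ({p ∈ Ioc 0 ⌊y ^ ((1 : ℝ) / (1 : ℕ))⌋₊ | p.Prime}.card : ℝ) =
      Nat.primeCounting ⌊y⌋₊ := by
    rw [Nat.cast_one, div_one, Real.rpow_one, ← Nat.primesLE_eq_filter_Ioc_zero,
      Nat.primesLE_card_eq_primeCounting]
  have hpowers (k : ℕ) (hk : k ∈ Ioc 1 (K + 1)) :
      ({p ∈ Ioc 0 ⌊y ^ ((1 : ℝ) / k)⌋₊ | p.Prime}.card : ℝ) ≤ √y := by
    have hk2 : (2 : ℝ) ≤ k := by exact_mod_cast (mem_Ioc.mp hk).1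
    calc
      _ ≤ (⌊y ^ ((1 : ℝ) / k)⌋₊ : ℝ) := by
        exact_mod_cast (card_filter_le _ _).trans_eq (Nat.card_Ioc _ _)
      _ ≤ y ^ ((1 : ℝ) / k) := Nat.floor_le (by positivity)
      _ ≤ y ^ ((1 : ℝ) / 2) := Real.rpow_le_rpow_of_exponent_le hy (by gcongr)
      _ = √y := (Real.sqrt_eq_rpow y).symm
  have hdecomp := Chebyshev.sum_PrimePow_eq_sum_sum' (fun _ => (1 : ℝ)) (by linarith : 0 ≤ y)
    K.le_succ
  simp only [sum_const, nsmul_eq_mul, mul_one] at hdecomp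
  rw [hdecomp, ← add_sum_Ioc_eq_sum_Icc (by omega), hprimes]
  gcongr
  calc
    _ ≤ ∑ _ ∈ Ioc 1 (K + 1), √y := sum_le_sum hpowers
    _ = K * √y := by simp
    _ ≤ 2 * Real.log y * √y := by gcongr

lemma exists_sum_primaryIndicator_le : ∃ C > 0, ∀ y : ℝ, 1 ≤ y →
    ∑ n ∈ Ioc 0 ⌊y⌋₊, primaryIndicator n ≤ C * (y / (1 + Real.log y)) := by
  obtain ⟨D, hD, hpow⟩ := exists_one_add_log_pow_le 2 one_half_pos
  refine ⟨11 + 2 * D, by positivity, fun y hy => ?_⟩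
  have hlog := Real.log_nonneg hy
  have hcard : ∑ n ∈ Ioc 0 ⌊y⌋₊, primaryIndicator n ≤
      1 + (#{n ∈ Ioc 0 ⌊y⌋₊ | IsPrimePow n} : ℝ) := by
    have hterm (n : ℕ) : primaryIndicator n ≤
        (if n = 1 then 1 else 0) + if IsPrimePow n then 1 else 0 := by
      rw [primaryIndicator]
      split_ifs <;> simp_all
    refine (sum_le_sum fun n _ => hterm n).trans ?_
    rw [sum_add_distrib, sum_ite_eq', sum_boole]
    gcongr
    split_ifs <;> norm_num
  have hsqrt : √y * (1 + Real.log y) ≤ D * (y / (1 + Real.log y)) := by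
    rw [mul_div_assoc', le_div_iff₀ (by linarith)]
    calc √y * (1 + Real.log y) * (1 + Real.log y) = √y * (1 + Real.log y) ^ 2 := by ring
      _ ≤ √y * (D * √y) := by
        gcongr
        rw [Real.sqrt_eq_rpow]
        exact hpow y hy
      _ = D * y := by rw [mul_left_comm, Real.mul_self_sqrt (by linarith)]
  have hsqrt1 : 1 ≤ √y := Real.one_le_sqrt.mpr hy
  nlinarith [card_isPrimePow_le hy, primeCounting_floor_le hy]

/-! ### Smooth integers and Rankin's trick -/

section SmoothIntegers

lemma hasSum_suppIndicator_le_mul_rpow {s : ℝ} (hs : 0 < s) (p : ℕ) :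
    HasSum (fun m : ℕ => suppIndicator (· ≤ p) m * (m : ℝ) ^ (-s))
      (∏ q ∈ p.primesLE, (1 - (q : ℝ) ^ (-s))⁻¹) := by
  let f : ℕ →* ℝ :=
    { toFun := fun n => (n : ℝ) ^ (-s)
      map_one' := by simp
      map_mul' := fun a b => by
        rw [Nat.cast_mul, Real.mul_rpow a.cast_nonneg b.cast_nonneg] }
  have hf {q : ℕ} (hq : q.Prime) : ‖f q‖ < 1 := by
    change ‖(q : ℝ) ^ (-s)‖ < 1
    rw [Real.norm_of_nonneg (by positivity)]
    exact Real.rpow_lt_one_of_one_lt_of_neg (mod_cast hq.one_lt) (neg_neg_of_pos hs)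
  have hindicator : (fun m : ℕ => suppIndicator (· ≤ p) m * (m : ℝ) ^ (-s)) =
      ((p + 1).smoothNumbers).indicator f := by
    classical
    funext m
    have hiff : (m ≠ 0 ∧ ∀ q ∈ m.primeFactors, q ≤ p) ↔ m ∈ (p + 1).smoothNumbers := by
      simp [Nat.mem_smoothNumbers]
    simp only [suppIndicator_apply, hiff, Set.indicator_apply, ite_mul, one_mul, zero_mul]
    rfl
  rw [hindicator, ← hasSum_subtype_iff_indicator]
  exact (EulerProduct.summable_and_hasSum_smoothNumbers_prod_primesBelow_geometric hf (p + 1)).2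

lemma tsum_rpow_neg_one_add_le {η : ℝ} (hη : 0 < η) :
    ∑' n : ℕ, (n : ℝ) ^ (-(1 + η)) ≤ 2 + 1 / η := by
  have hzeta : riemannZeta (1 + η) = ((∑' n : ℕ, (n : ℝ) ^ (-(1 + η)) : ℝ) : ℂ) := by
    rw [zeta_eq_tsum_one_div_nat_cpow (by simpa using hη), Complex.ofReal_tsum]
    refine tsum_congr fun n => ?_
    rw [Complex.ofReal_cpow n.cast_nonneg]
    push_cast
    rw [Complex.cpow_neg, one_div]
  have hbound := norm_riemannZeta_one_add_le hη
  rw [hzeta, Complex.norm_real] at hbound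
  exact (le_abs_self _).trans hbound

lemma rpow_div_log_le_exp {q y c : ℝ} (hq : 0 ≤ q) (hqy : q ≤ y) (hy : 1 < y) (hc : 0 ≤ c) :
    q ^ (c / log y) ≤ exp c := by
  have hlog : 0 < log y := log_pos hy
  calc
    _ ≤ y ^ (c / log y) := by gcongr
    _ = exp c := by
      rw [rpow_def_of_pos (by linarith), mul_div_cancel₀ _ hlog.ne']

lemma one_le_log_three_mul {y : ℝ} (hy : 1 ≤ y) : 1 ≤ log (3 * y) := by
  rw [le_log_iff_exp_le (by positivity)]
  linarith [exp_one_lt_d9]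

variable {p : ℕ}

lemma sum_primesLE_rpow_neg_one_add_le_log (p : ℕ) {η : ℝ} (hη : 0 < η) :
    ∑ q ∈ p.primesLE, (q : ℝ) ^ (-(1 + η)) ≤ log (2 + 1 / η) := by
  have hsum := hasSum_suppIndicator_le_mul_rpow (s := 1 + η) (by positivity) p
  have hprod : ∏ q ∈ p.primesLE, (1 - (q : ℝ) ^ (-(1 + η)))⁻¹ ≤ 2 + 1 / η := by
    rw [← hsum.tsum_eq]
    refine le_trans ?_ (tsum_rpow_neg_one_add_le hη)
    refine hsum.summable.tsum_le_tsum (fun m => ?_) (Real.summable_nat_rpow.mpr (by linarith))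
    exact mul_le_of_le_one_left (by positivity) (suppIndicator_le_one _ m)
  rw [le_log_iff_exp_le (by positivity), exp_sum]
  refine le_trans (prod_le_prod (fun q _ => (exp_pos _).le) fun q hq => ?_) hprod
  have hlt : (q : ℝ) ^ (-(1 + η)) < 1 :=
    Real.rpow_lt_one_of_one_lt_of_neg (mod_cast Nat.one_lt_of_mem_primesLE hq) (by linarith)
  rw [le_inv_comm₀ (exp_pos _) (sub_pos.mpr hlt), ← exp_neg]
  exact one_sub_le_exp_neg _

lemma sum_primesLE_one_div_le (hp : 1 ≤ p) :
    ∑ q ∈ p.primesLE, (1 : ℝ) / q ≤ 3 * log (3 * Real.log (3 * p)) := by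
  have hp' : (1 : ℝ) ≤ p := mod_cast hp
  have hl := one_le_log_three_mul hp'
  set l := Real.log (3 * p)
  have hterm (q) (hq : q ∈ p.primesLE) : (1 : ℝ) / q ≤ 3 * (q : ℝ) ^ (-(1 + 1 / l)) := by
    have hq0 : (0 : ℝ) < q := mod_cast (Nat.prime_of_mem_primesLE hq).pos
    have hqp : (q : ℝ) ≤ p := mod_cast Nat.le_of_mem_primesLE hq
    have hpow : (q : ℝ) ^ (1 / l) ≤ 3 :=
      (rpow_div_log_le_exp hq0.le (by linarith) (by linarith) zero_le_one).trans
        (by linarith [exp_one_lt_d9])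
    rw [rpow_neg hq0.le, rpow_add hq0, rpow_one, mul_inv, ← one_div, mul_left_comm,
      ← div_eq_mul_inv]
    refine le_mul_of_one_le_right (by positivity) ?_
    rwa [one_le_div (by positivity)]
  calc
    _ ≤ 3 * ∑ q ∈ p.primesLE, (q : ℝ) ^ (-(1 + 1 / l)) := by
      rw [mul_sum]
      exact sum_le_sum hterm
    _ ≤ 3 * log (2 + 1 / (1 / l)) := by
      gcongr
      exact sum_primesLE_rpow_neg_one_add_le_log p (by positivity)
    _ ≤ 3 * log (3 * l) := by
      rw [one_div_one_div]
      gcongr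
      linarith

lemma inv_one_sub_rpow_le_exp {q : ℕ} (hq : q ∈ p.primesLE) :
    (1 - (q : ℝ) ^ (-(1 - 1 / 2 / Real.log (3 * p))))⁻¹ ≤ exp (10 * (1 / q)) := by
  have hq2 : (2 : ℝ) ≤ q := mod_cast Nat.two_le_of_mem_primesLE hq
  have hqp : (q : ℝ) ≤ p := mod_cast Nat.le_of_mem_primesLE hq
  set v := (q : ℝ) ^ (-(1 - 1 / 2 / Real.log (3 * p)))
  have hexp : exp (1 / 2) ≤ 1.65 := by
    have hsq : exp (1 / 2) ^ 2 = exp 1 := by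
      rw [← exp_nat_mul]
      norm_num
    nlinarith [exp_one_lt_d9]
  have hv : v ≤ 1.65 * (1 / q) := by
    have hpow := rpow_div_log_le_exp (c := 1 / 2) (by linarith) (hqp.trans (by linarith))
      (by linarith : (1 : ℝ) < 3 * p) (by norm_num)
    calc
      v = (q : ℝ) ^ (1 / 2 / Real.log (3 * p)) * (1 / q) := by
        rw [mul_one_div, ← rpow_sub_one (by positivity), ← neg_sub 1]
      _ ≤ 1.65 * (1 / q) := by
        gcongr
        exact hpow.trans hexp
  have hq_inv : (1 : ℝ) / q ≤ 1 / 2 := by gcongr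
  have hq_pos : (0 : ℝ) < 1 / q := by positivity
  have hv1 : 0 < 1 - v := by linarith
  calc
    (1 - v)⁻¹ = v / (1 - v) + 1 := by field
    _ ≤ 10 * (1 / q) + 1 := by
      gcongr
      rw [div_le_iff₀ hv1]
      nlinarith
    _ ≤ exp (10 * (1 / q)) := add_one_le_exp _

lemma sum_suppIndicator_le_mul_rpow_le (hp : 1 ≤ p) (N : ℕ) :
    ∑ d ∈ Ioc 0 N, suppIndicator (· ≤ p) d * (d : ℝ) ^ (-(1 - 1 / 2 / Real.log (3 * p))) ≤
      (3 * Real.log (3 * p)) ^ 30 := by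
  have hl := one_le_log_three_mul (y := p) (mod_cast hp)
  set l := Real.log (3 * p)
  have hs : 0 < 1 - 1 / 2 / l := by
    have : 1 / 2 / l ≤ 1 / 2 := div_le_self (by norm_num) hl
    linarith
  calc
    _ ≤ ∏ q ∈ p.primesLE, (1 - (q : ℝ) ^ (-(1 - 1 / 2 / l)))⁻¹ :=
      sum_le_hasSum _ (fun d _ => mul_nonneg (suppIndicator_nonneg _ d) (by positivity))
        (hasSum_suppIndicator_le_mul_rpow hs p)
    _ ≤ ∏ q ∈ p.primesLE, exp (10 * (1 / q)) := by
      refine prod_le_prod (fun q hq => inv_nonneg.mpr (sub_nonneg.mpr ?_))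
        fun q hq => inv_one_sub_rpow_le_exp hq
      exact Real.rpow_le_one_of_one_le_of_nonpos
        (mod_cast (Nat.one_lt_of_mem_primesLE hq).le) (by linarith)
    _ = exp (10 * ∑ q ∈ p.primesLE, (1 : ℝ) / q) := by rw [← exp_sum, ← mul_sum]
    _ ≤ exp ((30 : ℕ) * log (3 * l)) := by
      refine exp_le_exp.mpr ?_
      push_cast
      linarith [sum_primesLE_one_div_le hp]
    _ = (3 * l) ^ 30 := by rw [exp_nat_mul, exp_log (by positivity)]

end SmoothIntegers

/-! ### The Mertens function over rough integers -/

lemma abs_suppMertens_div_le (P : ℕ → Prop) (t d : ℕ) : |suppMertens P (t / d)| ≤ (t : ℝ) / d :=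
  calc
    _ ≤ ∑ _ ∈ Ioc 0 (t / d), (1 : ℝ) :=
      (abs_suppMertens_le P _).trans (sum_le_sum fun m _ => suppIndicator_le_one P m)
    _ = ((t / d : ℕ) : ℝ) := by simp
    _ ≤ (t : ℝ) / d := Nat.cast_div_le

lemma half_one_add_log_le_one_add_log_div {t d : ℝ} (hd : 0 < d) (hdt : d ^ 2 ≤ t) :
    (1 + Real.log t) / 2 ≤ 1 + Real.log (t / d) := by
  have := log_le_log (by positivity) hdt
  rw [log_pow, Nat.cast_two] at this
  rw [log_div (by nlinarith [sq_pos_of_pos hd]) hd.ne']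
  linarith

-- For `d ≤ √t` the quotient `t / d` is large, so the Mertens function saves a power of `log t`;
-- for `d > √t` the factor `d ^ ε` pays for the trivial bound.
lemma exists_abs_suppMertens_true_div_le (A : ℕ) : ∃ C > 0, ∀ (t d : ℕ) (ε : ℝ), 1 ≤ d → d ≤ t →
    0 ≤ ε → |suppMertens (fun _ => True) (t / d)| ≤
      (d : ℝ) ^ (-(1 - ε)) * (C * t * (((1 + Real.log t) ^ A)⁻¹ + (t : ℝ) ^ (-(ε / 2)))) := by
  obtain ⟨C, hC, hmertens⟩ := exists_abs_sum_moebius_le A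
  refine ⟨C * 2 ^ A + 1, by positivity, fun t d ε hd hdt hε => ?_⟩
  have hd1 : (1 : ℝ) ≤ d := mod_cast hd
  have hdt' : (d : ℝ) ≤ t := mod_cast hdt
  have ht0 : (0 : ℝ) < t := by linarith
  have : 0 ≤ Real.log t := log_nonneg (by linarith)
  rcases le_or_gt ((d : ℝ) ^ 2) t with hsmall | hlarge
  · have hlog_div := half_one_add_log_le_one_add_log_div (by positivity) hsmall
    calc
      _ ≤ C * (t / d / (1 + Real.log (t / d)) ^ A) := by
        rw [suppMertens_true, ← Nat.floor_div_eq_div (K := ℝ)]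
        exact hmertens _ ((one_le_div (by positivity)).mpr hdt')
      _ ≤ C * (t / d / ((1 + Real.log t) / 2) ^ A) := by gcongr
      _ = (d : ℝ) ^ (-1 : ℝ) * (C * 2 ^ A * t * ((1 + Real.log t) ^ A)⁻¹) := by
        rw [rpow_neg_one, div_pow]
        field
      _ ≤ _ := by
        gcongr
        · linarith
        · exact le_add_of_nonneg_right zero_le_one
        · exact le_add_of_nonneg_right (by positivity)
  · have hpow : (d : ℝ) ^ (-ε) ≤ (t : ℝ) ^ (-(ε / 2)) :=
      calc
        (d : ℝ) ^ (-ε) = ((d : ℝ) ^ 2) ^ (-(ε / 2)) := by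
          rw [← rpow_natCast_mul (by positivity)]
          congr 1
          push_cast
          ring
        _ ≤ (t : ℝ) ^ (-(ε / 2)) := rpow_le_rpow_of_nonpos ht0 hlarge.le (by linarith)
    calc
      _ ≤ (t : ℝ) / d := abs_suppMertens_div_le _ t d
      _ = (d : ℝ) ^ (-(1 - ε)) * (1 * t * (d : ℝ) ^ (-ε)) := by
        rw [one_mul, mul_left_comm, ← rpow_add (by positivity), div_eq_mul_inv, ← rpow_neg_one]
        ring_nf
      _ ≤ _ := by
        gcongr
        · exact le_add_of_nonneg_left (by positivity)
        · exact hpow.trans (le_add_of_nonneg_left (by positivity))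

lemma exists_abs_suppMertens_lt_le (A : ℕ) : ∃ C > 0, ∀ p t : ℕ, 1 ≤ p → 1 ≤ t →
    |suppMertens (p < ·) t| ≤ C * (t * Real.log (3 * p) ^ 30 *
      (((1 + Real.log t) ^ A)⁻¹ + (t : ℝ) ^ (-(1 / 4 / Real.log (3 * p))))) := by
  obtain ⟨C, hC, hmertens⟩ := exists_abs_suppMertens_true_div_le A
  refine ⟨3 ^ 30 * C, by positivity, fun p t hp ht => ?_⟩
  have hl := one_le_log_three_mul (y := p) (mod_cast hp)
  have hrankin := sum_suppIndicator_le_mul_rpow_le hp t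
  set l := Real.log (3 * p)
  set E := ((1 + Real.log t) ^ A)⁻¹ + (t : ℝ) ^ (-(1 / 4 / l))
  have : 0 ≤ E := by positivity
  have hterm (d) (hd : d ∈ Ioc 0 t) : |suppMertens (fun _ => True) (t / d)| ≤
      (d : ℝ) ^ (-(1 - 1 / 2 / l)) * (C * t * E) := by
    have := hmertens t d (1 / 2 / l) (mem_Ioc.mp hd).1 (mem_Ioc.mp hd).2 (by positivity)
    rwa [show 1 / 2 / l / 2 = 1 / 4 / l by ring] at this
  calc
    _ ≤ ∑ d ∈ Ioc 0 t, |suppIndicator (· ≤ p) d * suppMertens (fun _ => True) (t / d)| := by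
      rw [suppMertens_lt_eq_sum]
      exact abs_sum_le_sum_abs _ _
    _ ≤ ∑ d ∈ Ioc 0 t, suppIndicator (· ≤ p) d * (d : ℝ) ^ (-(1 - 1 / 2 / l)) * (C * t * E) := by
      refine sum_le_sum fun d hd => ?_
      rw [abs_mul, abs_of_nonneg (suppIndicator_nonneg _ d), mul_assoc]
      exact mul_le_mul_of_nonneg_left (hterm d hd) (suppIndicator_nonneg _ d)
    _ ≤ (3 * l) ^ 30 * (C * t * E) := by
      rw [← sum_mul]
      gcongr
    _ = _ := by ring

lemma exists_abs_suppMertens_lt_le_of_le_log : ∃ C > 0, ∀ (p t : ℕ) (L : ℝ), 1 ≤ p → 1 ≤ t →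
    exp 1 ≤ L → Real.log t ≤ L → 136 * log L * Real.log (3 * p) ≤ Real.log t →
    |suppMertens (p < ·) t| ≤ C * (t * (((1 + Real.log t) ^ 3)⁻¹ + (L ^ 4)⁻¹)) := by
  obtain ⟨C, hC, hbound⟩ := exists_abs_suppMertens_lt_le 33
  refine ⟨C, hC, fun p t L hp ht hL htL hpt => (hbound p t hp ht).trans ?_⟩
  have hl := one_le_log_three_mul (y := p) (mod_cast hp)
  set l := Real.log (3 * p)
  have hL0 : 0 < L := (exp_pos 1).trans_le hL
  have hloglog : 1 ≤ log L := (le_log_iff_exp_le hL0).mpr hL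
  have hlt : l ≤ Real.log t := by nlinarith
  have hmain : l ^ 30 * ((1 + Real.log t) ^ 33)⁻¹ ≤ ((1 + Real.log t) ^ 3)⁻¹ :=
    calc
      _ ≤ (1 + Real.log t) ^ 30 * ((1 + Real.log t) ^ 33)⁻¹ := by
        gcongr
        linarith
      _ = _ := by field
  have htail : l ^ 30 * (t : ℝ) ^ (-(1 / 4 / l)) ≤ (L ^ 4)⁻¹ :=
    calc
      _ ≤ L ^ 30 * (L ^ 34)⁻¹ := by
        gcongr
        · exact hlt.trans htL
        · rw [← exp_log hL0, ← exp_nat_mul, ← Real.exp_neg, rpow_def_of_pos (mod_cast ht)]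
          gcongr
          rw [mul_neg, neg_le_neg_iff, div_div, mul_one_div, le_div_iff₀ (by positivity)]
          push_cast
          linarith
      _ = _ := by field
  rw [mul_assoc (t : ℝ), mul_add]
  gcongr

/-! ### Reciprocal sums -/

lemma sum_Ioc_one_div_eq_harmonic (n : ℕ) : ∑ i ∈ Ioc 0 n, (1 : ℝ) / i = harmonic n := by
  rw [harmonic_eq_sum_Icc]
  push_cast
  exact sum_congr rfl fun i _ => one_div _

lemma sum_Ioc_one_div_le (n : ℕ) : ∑ i ∈ Ioc 0 n, (1 : ℝ) / i ≤ 1 + Real.log n := by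
  rw [sum_Ioc_one_div_eq_harmonic]
  exact harmonic_le_one_add_log n

lemma log_add_one_le_sum_Ioc_one_div (n : ℕ) :
    Real.log (n + 1) ≤ ∑ i ∈ Ioc 0 n, (1 : ℝ) / i := by
  rw [sum_Ioc_one_div_eq_harmonic]
  exact_mod_cast log_add_one_le_harmonic n

lemma injOn_mul_of_coprime {S T : Finset ℕ} (hS : ∀ d ∈ S, d ≠ 0)
    (hST : ∀ d ∈ S, ∀ m ∈ T, d.Coprime m) :
    Set.InjOn (fun a : ℕ × ℕ => a.1 * a.2) (S ×ˢ T : Finset (ℕ × ℕ)) := by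
  rintro ⟨d, m⟩ h ⟨d', m'⟩ h' (heq : d * m = d' * m')
  obtain ⟨hd, hm⟩ := mem_product.mp h
  obtain ⟨hd', hm'⟩ := mem_product.mp h'
  have hdd' : d = d' := Nat.dvd_antisymm
    ((hST d hd m' hm').dvd_of_dvd_mul_right (heq ▸ dvd_mul_right d m))
    ((hST d' hd' m hm).dvd_of_dvd_mul_right (heq ▸ dvd_mul_right d' m'))
  subst hdd'
  rw [Nat.eq_of_mul_eq_mul_left (Nat.pos_of_ne_zero (hS d hd)) heq]

lemma coprime_of_forall_primeFactors_lt {d m p : ℕ} (hd : d ≠ 0) (hdp : d ≤ p) (hm : m ≠ 0)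
    (hmp : ∀ q ∈ m.primeFactors, p < q) : d.Coprime m := by
  rw [← Nat.disjoint_primeFactors hd hm, disjoint_left]
  intro q hqd hqm
  exact (hmp q hqm).not_ge ((Nat.le_of_mem_primeFactors hqd).trans hdp)

-- The products `d * m` with `d ≤ p` and `m ≤ z` free of prime factors `≤ p` are distinct.
lemma log_add_one_mul_sum_suppIndicator_lt_div_le {p z : ℕ} (hp : 1 ≤ p) (hz : 1 ≤ z) :
    Real.log (p + 1) * ∑ m ∈ Ioc 0 z, suppIndicator (p < ·) m / m ≤
      1 + (Real.log p + Real.log z) := by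
  classical
  set A := {m ∈ Ioc 0 z | ∀ q ∈ m.primeFactors, p < q}
  have hA (m) (hm : m ∈ A) : 0 < m ∧ m ≤ z ∧ ∀ q ∈ m.primeFactors, p < q := by
    simpa [A, and_assoc] using hm
  have hsum : ∑ m ∈ Ioc 0 z, suppIndicator (p < ·) m / m = ∑ m ∈ A, (1 : ℝ) / m := by
    rw [sum_filter]
    refine sum_congr rfl fun m hm => ?_
    simp only [suppIndicator_apply, ne_eq, (mem_Ioc.mp hm).1.ne', not_false_eq_true, true_and]
    split_ifs <;> simp
  have hinj := injOn_mul_of_coprime (S := Ioc 0 p) (T := A)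
    (fun d hd => (mem_Ioc.mp hd).1.ne') fun d hd m hm =>
      coprime_of_forall_primeFactors_lt (mem_Ioc.mp hd).1.ne' (mem_Ioc.mp hd).2 (hA m hm).1.ne'
        (hA m hm).2.2
  calc
    _ ≤ (∑ d ∈ Ioc 0 p, (1 : ℝ) / d) * ∑ m ∈ A, (1 : ℝ) / m := by
      rw [hsum]
      gcongr
      exact log_add_one_le_sum_Ioc_one_div p
    _ = ∑ a ∈ Ioc 0 p ×ˢ A, (1 : ℝ) / (a.1 * a.2 : ℕ) := by
      rw [sum_mul_sum, sum_product]
      simp only [Nat.cast_mul, one_div_mul_one_div]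
    _ = ∑ n ∈ (Ioc 0 p ×ˢ A).image fun a => a.1 * a.2, (1 : ℝ) / n := by rw [sum_image hinj]
    _ ≤ ∑ n ∈ Ioc 0 (p * z), (1 : ℝ) / n := by
      refine sum_le_sum_of_subset_of_nonneg (image_subset_iff.mpr fun a ha => ?_)
        fun n _ _ => by positivity
      obtain ⟨hd, hm⟩ := mem_product.mp ha
      obtain ⟨hd0, hdp⟩ := mem_Ioc.mp hd
      exact mem_Ioc.mpr ⟨Nat.mul_pos hd0 (hA _ hm).1, Nat.mul_le_mul hdp (hA _ hm).2.1⟩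
    _ ≤ 1 + Real.log (p * z : ℕ) := sum_Ioc_one_div_le _
    _ = _ := by
      rw [Nat.cast_mul, Real.log_mul (by positivity) (by positivity)]

lemma one_div_add_one_le_log_sub_log {n : ℕ} (hn : 1 ≤ n) :
    1 / ((n : ℝ) + 1) ≤ Real.log (n + 1) - Real.log n := by
  have h := Real.log_le_sub_one_of_pos (x := (n : ℝ) / (n + 1)) (by positivity)
  rw [Real.log_div (by positivity) (by positivity)] at h
  have : (n : ℝ) / (n + 1) - 1 = -(1 / ((n : ℝ) + 1)) := by field
  linarith

lemma sum_one_div_mul_one_add_log_sq_le {n : ℕ} (hn : 1 ≤ n) :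
    ∑ k ∈ Ioc 0 n, (1 : ℝ) / (k * (1 + Real.log k) ^ 2) ≤ 2 - 1 / (1 + Real.log n) := by
  induction n, hn using Nat.le_induction with
  | base => norm_num
  | succ n hn ih =>
    rw [sum_Ioc_succ_top n.zero_le]
    push_cast
    have hdiff := one_div_add_one_le_log_sub_log hn
    have hpos : 0 < 1 / ((n : ℝ) + 1) := by positivity
    have ha : 0 ≤ Real.log n := Real.log_natCast_nonneg n
    set a := Real.log n
    set b := Real.log (n + 1)
    have hab : a ≤ b := by linarith
    have hb : 0 ≤ b := ha.trans hab
    have hstep : (1 : ℝ) / ((n + 1) * (1 + b) ^ 2) ≤ 1 / (1 + a) - 1 / (1 + b) :=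
      calc
        (1 : ℝ) / ((n + 1) * (1 + b) ^ 2) = 1 / (n + 1) / ((1 + b) * (1 + b)) := by
          rw [div_div, sq]
        _ ≤ (b - a) / ((1 + a) * (1 + b)) := by
          gcongr
        _ = 1 / (1 + a) - 1 / (1 + b) := by field
    linarith

lemma sum_mul_sum_Ioc_div_comm (f g : ℕ → ℝ) (X : ℕ) :
    ∑ d ∈ Ioc 0 X, f d * ∑ k ∈ Ioc 0 (X / d), g k =
      ∑ k ∈ Ioc 0 X, g k * ∑ d ∈ Ioc 0 (X / k), f d := by
  simp only [mul_sum]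
  rw [sum_comm' (t' := Ioc 0 X) (s' := fun k => Ioc 0 (X / k))]
  · simp only [mul_comm]
  · intro d k
    simp only [mem_Ioc]
    constructor
    · rintro ⟨⟨hd, -⟩, hk, hkd⟩
      rw [Nat.le_div_iff_mul_le hd] at hkd
      exact ⟨⟨hd, (Nat.le_div_iff_mul_le hk).mpr (by rwa [mul_comm])⟩, hk,
        (Nat.le_mul_of_pos_right k hd).trans hkd⟩
    · rintro ⟨⟨hd, hdk⟩, hk, -⟩
      rw [Nat.le_div_iff_mul_le hk] at hdk
      exact ⟨⟨hd, (Nat.le_mul_of_pos_right d hk).trans hdk⟩, hk,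
        (Nat.le_div_iff_mul_le hd).mpr (by rwa [mul_comm])⟩

/-! ### Small smallest prime factors -/

-- The bound is a sum over `k ≤ t`, so that it can be summed over `t = X / d` by exchanging the
-- order of summation.
lemma exists_abs_suppMertens_lt_le_sum : ∃ C > 0, ∀ (p t : ℕ) (L : ℝ), 1 ≤ p → 1 ≤ t →
    exp 1 ≤ L → Real.log t ≤ L →
    |suppMertens (p < ·) t| ≤
      ∑ k ∈ Ioc 0 t, ((if Real.log k < 136 * log L * Real.log (3 * p)
        then suppIndicator (p < ·) k else 0) + C * (((1 + Real.log k) ^ 3)⁻¹ + (L ^ 4)⁻¹)) := by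
  obtain ⟨C, hC, hbound⟩ := exists_abs_suppMertens_lt_le_of_le_log
  refine ⟨C, hC, fun p t L hp ht hL htL => ?_⟩
  have hL0 : 0 < L := (exp_pos 1).trans_le hL
  have hlog (k : ℕ) : 0 ≤ Real.log k := Real.log_natCast_nonneg k
  have hlog_le (k) (hk : k ∈ Ioc 0 t) : Real.log k ≤ Real.log t := by
    obtain ⟨hk0, hkt⟩ := mem_Ioc.mp hk
    gcongr
  rcases lt_or_ge (Real.log t) (136 * log L * Real.log (3 * p)) with ht_small | ht_large
  · refine (abs_suppMertens_le _ t).trans (sum_le_sum fun k hk => ?_)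
    rw [if_pos ((hlog_le k hk).trans_lt ht_small)]
    have := hlog k
    exact le_add_of_nonneg_right (by positivity)
  · calc
      _ ≤ C * (t * (((1 + Real.log t) ^ 3)⁻¹ + (L ^ 4)⁻¹)) := hbound p t L hp ht hL htL ht_large
      _ = ∑ k ∈ Ioc 0 t, C * (((1 + Real.log t) ^ 3)⁻¹ + (L ^ 4)⁻¹) := by
        rw [sum_const, nsmul_eq_mul, Nat.card_Ioc, Nat.sub_zero]
        ring
      _ ≤ _ := by
        refine sum_le_sum fun k hk => (?_ : _ ≤ _).trans (le_add_of_nonneg_left ?_)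
        · have := hlog k
          have := hlog_le k hk
          gcongr
        · split_ifs
          exacts [suppIndicator_nonneg _ k, le_rfl]

lemma exists_sum_primaryIndicator_mul_sum_le : ∃ C > 0, ∀ (g : ℕ → ℝ) (X : ℕ), (∀ k, 0 ≤ g k) →
    ∑ d ∈ Ioc 0 X, primaryIndicator d * ∑ k ∈ Ioc 0 (X / d), g k ≤
      C * ∑ k ∈ Ioc 0 X, g k * (X / k / (1 + Real.log (X / k))) := by
  obtain ⟨C, hC, hprimary⟩ := exists_sum_primaryIndicator_le
  refine ⟨C, hC, fun g X hg => ?_⟩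
  rw [sum_mul_sum_Ioc_div_comm, mul_sum]
  refine sum_le_sum fun k hk => ?_
  obtain ⟨hk0, hkX⟩ := mem_Ioc.mp hk
  have h := hprimary ((X : ℝ) / k) ((one_le_div (mod_cast hk0)).mpr (mod_cast hkX))
  rw [Nat.floor_div_eq_div] at h
  rw [mul_left_comm]
  exact mul_le_mul_of_nonneg_left h (hg k)

section Weights

variable {X : ℕ}

lemma sum_ite_log_lt_mul_div_le {g : ℕ → ℝ} {W : ℝ} (hg : ∀ k, 0 ≤ g k) (hX : 1 ≤ X)
    (hWX : 2 * W ≤ Real.log X) :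
    ∑ k ∈ Ioc 0 X, (if Real.log k < W then g k else 0) * (X / k / (1 + Real.log (X / k))) ≤
      2 * (X / (1 + Real.log X)) * ∑ k ∈ Ioc 0 ⌊exp W⌋₊, g k / k := by
  have hX0 : (0 : ℝ) < X := mod_cast hX
  have : 0 ≤ Real.log X := Real.log_natCast_nonneg X
  have hterm (k : ℕ) (hk : k ∈ {k ∈ Ioc 0 X | Real.log (k : ℕ) < W}) :
      g k * (X / k / (1 + Real.log (X / k))) ≤ 2 * (X / (1 + Real.log X)) * (g k / k) := by
    obtain ⟨hk, hkW⟩ := mem_filter.mp hk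
    have hk0 : (0 : ℝ) < k := mod_cast (mem_Ioc.mp hk).1
    rw [Real.log_div hX0.ne' hk0.ne']
    calc
      _ ≤ g k * (X / k / ((1 + Real.log X) / 2)) := by
        have := hg k
        gcongr
        linarith
      _ = _ := by field
  simp only [ite_mul, zero_mul]
  rw [← sum_filter, mul_sum]
  refine (sum_le_sum hterm).trans (sum_le_sum_of_subset_of_nonneg (fun k hk => ?_) fun k _ _ => ?_)
  · obtain ⟨hk, hkW⟩ := mem_filter.mp hk
    have hk0 := (mem_Ioc.mp hk).1
    exact mem_Ioc.mpr ⟨hk0, Nat.le_floor ((log_le_iff_le_exp (mod_cast hk0)).mp hkW.le)⟩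
  · have := hg k
    positivity

lemma sum_log_cube_inv_add_mul_div_le {L : ℝ} (hX : 1 ≤ X) (hL : 1 ≤ L)
    (hXL : 1 + Real.log X ≤ 2 * L) :
    ∑ k ∈ Ioc 0 X, (((1 + Real.log k) ^ 3)⁻¹ + (L ^ 4)⁻¹) * (X / k / (1 + Real.log (X / k))) ≤
      6 * (X / (1 + Real.log X)) := by
  have hX0 : (0 : ℝ) < X := mod_cast hX
  have : 0 ≤ Real.log X := Real.log_natCast_nonneg X
  have hterm (k) (hk : k ∈ Ioc 0 X) :
      (((1 + Real.log k) ^ 3)⁻¹ + (L ^ 4)⁻¹) * (X / k / (1 + Real.log (X / k))) ≤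
        (1 / (k * (1 + Real.log k) ^ 2) + (L ^ 4)⁻¹ * (1 + Real.log X) * (1 / k)) *
          (X / (1 + Real.log X)) := by
    obtain ⟨hk0, hkX⟩ := mem_Ioc.mp hk
    have hk0' : (0 : ℝ) < k := mod_cast hk0
    have hlogk : 0 ≤ Real.log k := Real.log_natCast_nonneg k
    have hlog_le : Real.log k ≤ Real.log X := by gcongr
    have : 0 < 1 + (Real.log X - Real.log k) := by linarith
    rw [Real.log_div hX0.ne' hk0'.ne']
    calc
      _ ≤ (((1 + Real.log k) ^ 3)⁻¹ + (L ^ 4)⁻¹) *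
          (X / k / ((1 + Real.log X) / (1 + Real.log k))) := by
        gcongr
        rw [div_le_iff₀ (by positivity)]
        nlinarith
      _ = (1 / (k * (1 + Real.log k) ^ 2) + (L ^ 4)⁻¹ * (1 + Real.log k) * (1 / k)) *
          (X / (1 + Real.log X)) := by field
      _ ≤ _ := by gcongr
  refine (sum_le_sum hterm).trans ?_
  rw [← sum_mul, sum_add_distrib, ← mul_sum]
  gcongr
  have hmain : ∑ k ∈ Ioc 0 X, (1 : ℝ) / (k * (1 + Real.log k) ^ 2) ≤ 2 :=
    (sum_one_div_mul_one_add_log_sq_le hX).trans (sub_le_self _ (by positivity))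
  have htail : (L ^ 4)⁻¹ * (1 + Real.log X) * ∑ k ∈ Ioc 0 X, (1 : ℝ) / k ≤ 4 :=
    calc
      _ ≤ (L ^ 4)⁻¹ * (1 + Real.log X) * (1 + Real.log X) := by
        gcongr
        exact sum_Ioc_one_div_le X
      _ ≤ (L ^ 4)⁻¹ * (2 * L) * (2 * L) := by gcongr
      _ = 4 * (L ^ 2)⁻¹ := by field
      _ ≤ 4 := mul_le_of_le_one_right (by norm_num) (inv_le_one_of_one_le₀ (one_le_pow₀ hL))
  linarith

end Weights

lemma log_three_mul_le {y : ℝ} (hy : 2 ≤ y) : log (3 * y) ≤ 3 * log y := by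
  rw [← Nat.cast_ofNat (n := 3) (R := ℝ), ← log_pow]
  gcongr
  push_cast
  nlinarith [mul_le_mul hy hy zero_le_two (by linarith)]

lemma sum_suppIndicator_lt_div_le {p : ℕ} {c u : ℝ} (hp : 2 ≤ p) (hc : 0 ≤ c) (hu : 1 ≤ u) :
    ∑ m ∈ Ioc 0 ⌊exp (c * u * Real.log (3 * p))⌋₊, suppIndicator (p < ·) m / m ≤
      (3 * c + 3) * u := by
  have hp' : (2 : ℝ) ≤ p := mod_cast hp
  have hlog2 := log_two_gt_d9
  have hlog : Real.log 2 ≤ Real.log p := by gcongr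
  set W := c * u * Real.log (3 * p)
  have hW : 0 ≤ W := by
    have := one_le_log_three_mul (y := p) (by linarith)
    positivity
  have hfloor : 1 ≤ ⌊exp W⌋₊ := Nat.le_floor (by simpa using hW)
  refine le_of_mul_le_mul_left ?_ (by linarith : 0 < Real.log p)
  calc
    _ ≤ Real.log (p + 1) * ∑ m ∈ Ioc 0 ⌊exp W⌋₊, suppIndicator (p < ·) m / m := by
      gcongr
      · exact sum_nonneg fun m _ => div_nonneg (suppIndicator_nonneg _ m) m.cast_nonneg
      · linarith
    _ ≤ 1 + (Real.log p + Real.log ⌊exp W⌋₊) :=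
      log_add_one_mul_sum_suppIndicator_lt_div_le (by linarith) hfloor
    _ ≤ 1 + (Real.log p + c * u * (3 * Real.log p)) := by
      gcongr
      calc
        Real.log ⌊exp W⌋₊ ≤ W :=
          (log_le_iff_le_exp (mod_cast hfloor)).mpr (Nat.floor_le (exp_pos W).le)
        _ ≤ _ := mul_le_mul_of_nonneg_left (log_three_mul_le hp') (by positivity)
    _ ≤ Real.log p * ((3 * c + 3) * u) := by nlinarith

lemma exists_sum_primaryIndicator_mul_abs_suppMertens_le : ∃ C > 0, ∀ (p X : ℕ) (L : ℝ),
    p.Prime → 1 ≤ X → exp 1 ≤ L → Real.log X ≤ L →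
    272 * log L * Real.log (3 * p) ≤ Real.log X →
    ∑ d ∈ Ioc 0 X, primaryIndicator d * |suppMertens (p < ·) (X / d)| ≤
      C * (X * log L / (1 + Real.log X)) := by
  obtain ⟨C, hC, hmajorant⟩ := exists_abs_suppMertens_lt_le_sum
  obtain ⟨D, hD, hweight⟩ := exists_sum_primaryIndicator_mul_sum_le
  refine ⟨D * (822 + 6 * C), by positivity, fun p X L hp hX hL hXL hpX => ?_⟩
  have hL1 : 1 ≤ L := (one_le_exp zero_le_one).trans hL
  have hloglog : 1 ≤ log L := (le_log_iff_exp_le (by linarith)).mpr hL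
  have : 0 ≤ Real.log X := Real.log_natCast_nonneg X
  set W := 136 * log L * Real.log (3 * p)
  set e₁ : ℕ → ℝ := fun k => if Real.log k < W then suppIndicator (p < ·) k else 0
  set e₂ : ℕ → ℝ := fun k => ((1 + Real.log k) ^ 3)⁻¹ + (L ^ 4)⁻¹
  set w : ℕ → ℝ := fun k => X / k / (1 + Real.log (X / k))
  have he₁ (k) : 0 ≤ e₁ k := by
    simp only [e₁]
    split_ifs
    exacts [suppIndicator_nonneg _ k, le_rfl]
  have he₂ (k) : 0 ≤ e₂ k := by
    have := Real.log_natCast_nonneg k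
    positivity
  have hmain : ∑ k ∈ Ioc 0 X, e₁ k * w k ≤ 2 * (X / (1 + Real.log X)) * (411 * log L) := by
    refine (sum_ite_log_lt_mul_div_le (suppIndicator_nonneg _) hX (by linarith)).trans ?_
    gcongr
    exact (sum_suppIndicator_lt_div_le (c := 136) hp.two_le (by norm_num) hloglog).trans_eq
      (by ring)
  have htail : ∑ k ∈ Ioc 0 X, e₂ k * w k ≤ 6 * (X / (1 + Real.log X)) * log L :=
    (sum_log_cube_inv_add_mul_div_le hX hL1 (by linarith)).trans
      (le_mul_of_one_le_right (by positivity) hloglog)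
  calc
    _ ≤ ∑ d ∈ Ioc 0 X, primaryIndicator d * ∑ k ∈ Ioc 0 (X / d), (e₁ k + C * e₂ k) := by
      refine sum_le_sum fun d hd => mul_le_mul_of_nonneg_left ?_ (primaryIndicator_nonneg d)
      obtain ⟨hd0, hdX⟩ := mem_Ioc.mp hd
      have hpos : 1 ≤ X / d := (Nat.one_le_div_iff hd0).mpr hdX
      refine hmajorant p _ L hp.one_le hpos hL (le_trans ?_ hXL)
      gcongr
      exact Nat.div_le_self X d
    _ ≤ D * ∑ k ∈ Ioc 0 X, (e₁ k + C * e₂ k) * w k :=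
      hweight _ X fun k => add_nonneg (he₁ k) (mul_nonneg hC.le (he₂ k))
    _ = D * (∑ k ∈ Ioc 0 X, e₁ k * w k + C * ∑ k ∈ Ioc 0 X, e₂ k * w k) := by
      simp only [add_mul, sum_add_distrib, mul_sum, mul_assoc]
    _ ≤ D * (2 * (X / (1 + Real.log X)) * (411 * log L) +
        C * (6 * (X / (1 + Real.log X)) * log L)) := by gcongr
    _ = _ := by ring

lemma exp_one_le_log {x : ℝ} (hx : 16 ≤ x) : exp 1 ≤ log x := by
  have hlog16 : Real.log 16 = 4 * Real.log 2 := by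
    rw [show (16 : ℝ) = 2 ^ 4 by norm_num, log_pow]
    norm_num
  have hmono : Real.log 16 ≤ log x := by gcongr
  linarith [log_two_gt_d9, exp_one_lt_d9]

lemma one_le_log_log {x : ℝ} (hx : 16 ≤ x) : 1 ≤ log (log x) :=
  (le_log_iff_exp_le ((exp_pos 1).trans_le (exp_one_le_log hx))).mpr (exp_one_le_log hx)

lemma le_three_mul_mul_floor_div {p : ℕ} {x : ℝ} (hp : 1 ≤ p) (hpx : p ≤ x) :
    x ≤ 3 * p * (⌊x⌋₊ / p : ℕ) := by
  have hX : (1 : ℝ) ≤ (⌊x⌋₊ / p : ℕ) :=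
    mod_cast (Nat.one_le_div_iff hp).mpr (Nat.le_floor hpx)
  have hfloor : (⌊x⌋₊ : ℝ) + 1 ≤ p * ((⌊x⌋₊ / p : ℕ) + 1) := mod_cast Nat.lt_mul_div_succ _ hp
  have : (0 : ℝ) ≤ p := p.cast_nonneg
  nlinarith [Nat.lt_floor_add_one x]

lemma exists_sum_primaryIndicator_mul_abs_suppMertens_floor_le : ∃ C > 0, ∀ (p : ℕ) (x : ℝ),
    p.Prime → 16 ≤ x → 600 * log (log x) * Real.log (3 * p) ≤ log x →
    ∑ d ∈ Ioc 0 (⌊x⌋₊ / p), primaryIndicator d * |suppMertens (p < ·) (⌊x⌋₊ / p / d)| ≤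
      C * (1 / p * (x * log (log x) / log x)) := by
  obtain ⟨C, hC, hcore⟩ := exists_sum_primaryIndicator_mul_abs_suppMertens_le
  refine ⟨2 * C, by positivity, fun p x hp hx hpx => ?_⟩
  have hL := exp_one_le_log hx
  have hloglog := one_le_log_log hx
  set L := log x
  have hL0 : 0 < L := (exp_pos 1).trans_le hL
  have hp1 : (1 : ℝ) ≤ p := mod_cast hp.one_le
  have hl := one_le_log_three_mul hp1
  have hlL : 600 * Real.log (3 * p) ≤ L := by nlinarith
  have hp_le : 3 * p ≤ x := by
    rw [← log_le_log_iff (by positivity) (by linarith)]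
    linarith
  set X := ⌊x⌋₊ / p
  have hX : 1 ≤ X := (Nat.one_le_div_iff hp.pos).mpr (Nat.le_floor (by linarith))
  have hX_le : (X : ℝ) ≤ x / p := by
    refine Nat.cast_div_le.trans ?_
    gcongr
    exact Nat.floor_le (by linarith)
  have hlogX_le : Real.log X ≤ L :=
    log_le_log (by positivity) (hX_le.trans (div_le_self (by linarith) hp1))
  have hlog_le : L ≤ Real.log (3 * p) + Real.log X := by
    rw [← Real.log_mul (by positivity) (by positivity)]
    refine log_le_log (by linarith) ?_
    exact le_three_mul_mul_floor_div hp.one_le (by linarith)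
  have hhalf : L / 2 ≤ 1 + Real.log X := by linarith
  calc
    _ ≤ C * (X * log L / (1 + Real.log X)) :=
      hcore p X L hp hX hL hlogX_le (by nlinarith)
    _ ≤ C * (x / p * log L / (L / 2)) := by gcongr
    _ = _ := by field

/-! ### Large smallest prime factors -/

lemma suppIndicator_mul_log_le (P : ℕ → Prop) (n : ℕ) :
    suppIndicator P n * Real.log n ≤ (suppIndicator P * vonMangoldt) n := by
  rw [mul_apply, ← vonMangoldt_sum,
    ← Nat.sum_divisorsAntidiagonal' (f := fun _ d => vonMangoldt d), mul_sum]
  refine sum_le_sum fun a ha => ?_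
  obtain ⟨rfl, hn⟩ := Nat.mem_divisorsAntidiagonal.mp ha
  rw [suppIndicator_mul P (left_ne_zero_of_mul hn) (right_ne_zero_of_mul hn)]
  refine mul_le_mul_of_nonneg_right ?_ vonMangoldt_nonneg
  exact mul_le_of_le_one_right (suppIndicator_nonneg P _) (suppIndicator_le_one P _)

lemma sum_vonMangoldt_Ioc_div_le (N m : ℕ) :
    ∑ d ∈ Ioc 0 (N / m), vonMangoldt d ≤ 6 * (N / m : ℝ) := by
  have hpsi := Chebyshev.psi_le_const_mul_self (x := (N : ℝ) / m) (by positivity)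
  rw [Chebyshev.psi, Nat.floor_div_eq_div] at hpsi
  have hlog4 : Real.log 4 = 2 * Real.log 2 := by
    rw [show (4 : ℝ) = 2 ^ 2 by norm_num, log_pow, Nat.cast_ofNat]
  refine hpsi.trans ?_
  gcongr
  linarith [log_two_lt_d9]

lemma sum_suppIndicator_mul_log_le (P : ℕ → Prop) (N : ℕ) :
    ∑ n ∈ Ioc 0 N, suppIndicator P n * Real.log n ≤
      6 * (N * ∑ m ∈ Ioc 0 N, suppIndicator P m / m) :=
  calc
    _ ≤ ∑ n ∈ Ioc 0 N, (suppIndicator P * vonMangoldt) n :=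
      sum_le_sum fun n _ => suppIndicator_mul_log_le P n
    _ = ∑ m ∈ Ioc 0 N, suppIndicator P m * ∑ d ∈ Ioc 0 (N / m), vonMangoldt d :=
      sum_Ioc_mul_eq_sum_sum _ _ N
    _ ≤ ∑ m ∈ Ioc 0 N, suppIndicator P m * (6 * (N / m)) :=
      sum_le_sum fun m _ =>
        mul_le_mul_of_nonneg_left (sum_vonMangoldt_Ioc_div_le N m) (suppIndicator_nonneg P m)
    _ = _ := by
      simp only [mul_sum]
      exact sum_congr rfl fun m _ => by ring

lemma log_mul_sum_suppIndicator_le (P : ℕ → Prop) {x : ℝ} (hx : 0 < x) :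
    log x * ∑ n ∈ Ioc 0 ⌊x⌋₊, suppIndicator P n ≤
      7 * (x * ∑ n ∈ Ioc 0 ⌊x⌋₊, suppIndicator P n / n) := by
  have hterm (n : ℕ) (hn : n ∈ Ioc 0 ⌊x⌋₊) :
      log x * suppIndicator P n ≤
        suppIndicator P n * Real.log n + x * (suppIndicator P n / n) := by
    have hn0 : (0 : ℝ) < n := mod_cast (mem_Ioc.mp hn).1
    have hlog := log_le_sub_one_of_pos (div_pos hx hn0)
    rw [Real.log_div hx.ne' hn0.ne'] at hlog
    calc
      _ ≤ (Real.log n + x / n) * suppIndicator P n :=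
        mul_le_mul_of_nonneg_right (by linarith) (suppIndicator_nonneg P n)
      _ = _ := by ring
  have hfloor : ⌊x⌋₊ * ∑ n ∈ Ioc 0 ⌊x⌋₊, suppIndicator P n / n ≤
      x * ∑ n ∈ Ioc 0 ⌊x⌋₊, suppIndicator P n / n :=
    mul_le_mul_of_nonneg_right (Nat.floor_le hx.le)
      (sum_nonneg fun n _ => div_nonneg (suppIndicator_nonneg P n) n.cast_nonneg)
  have hsum := sum_le_sum hterm
  rw [← mul_sum, sum_add_distrib, ← mul_sum] at hsum
  linarith [sum_suppIndicator_mul_log_le P ⌊x⌋₊]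

lemma card_primeFactors_mul_log_add_one_le {n p : ℕ} (hn : n ≠ 0)
    (hp : ∀ q ∈ n.primeFactors, p < q) :
    n.primeFactors.card * Real.log (p + 1) ≤ Real.log n := by
  have hpow : (p + 1) ^ n.primeFactors.card ≤ n :=
    (pow_card_le_prod _ _ _ hp).trans
      (Nat.le_of_dvd (Nat.pos_of_ne_zero hn) (Nat.prod_primeFactors_dvd n))
  rw [← Real.log_pow]
  exact log_le_log (by positivity) (mod_cast hpow)

lemma sum_suppIndicator_lt_mul_card_primeFactors_le {p : ℕ} {x u : ℝ} (hp : 1 ≤ p)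
    (hpx : p ≤ x) (hx : exp 1 ≤ x) (hu : log x ≤ u * Real.log (p + 1)) :
    ∑ n ∈ Ioc 0 ⌊x⌋₊, suppIndicator (p < ·) n * n.primeFactors.card ≤
      21 * (x * u ^ 2 / log x) := by
  have hx0 : 0 < x := (exp_pos 1).trans_le hx
  have hL : 1 ≤ log x := (le_log_iff_exp_le hx0).mpr hx
  have hp' : (1 : ℝ) ≤ p := mod_cast hp
  have hlog : 0 < Real.log (p + 1) := log_pos (by linarith)
  have hu0 : 0 < u := pos_of_mul_pos_left (by linarith) hlog.le
  have hfloor : (⌊x⌋₊ : ℝ) ≤ x := Nat.floor_le hx0.le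
  have hfloor_pos : 1 ≤ ⌊x⌋₊ := Nat.le_floor (by simpa using hp'.trans hpx)
  have hrecip : ∑ m ∈ Ioc 0 ⌊x⌋₊, suppIndicator (p < ·) m / m ≤ 3 * u := by
    have hrough := log_add_one_mul_sum_suppIndicator_lt_div_le hp hfloor_pos
    have hlogp : Real.log p ≤ log x := by gcongr
    have hlogfloor : Real.log ⌊x⌋₊ ≤ log x := log_le_log (mod_cast hfloor_pos) hfloor
    exact le_of_mul_le_mul_left (by linarith) hlog
  have hcount : ∑ n ∈ Ioc 0 ⌊x⌋₊, suppIndicator (p < ·) n ≤ 7 * (x * (3 * u)) / log x := by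
    rw [le_div_iff₀' (by linarith)]
    refine (log_mul_sum_suppIndicator_le _ hx0).trans ?_
    gcongr
  have homega (n : ℕ) (hn : n ∈ Ioc 0 ⌊x⌋₊) :
      suppIndicator (p < ·) n * n.primeFactors.card ≤ suppIndicator (p < ·) n * u := by
    obtain ⟨hn0, hnx⟩ := mem_Ioc.mp hn
    by_cases hrough : ∀ q ∈ n.primeFactors, p < q
    · refine mul_le_mul_of_nonneg_left (le_of_mul_le_mul_right ?_ hlog) (suppIndicator_nonneg _ n)
      refine (card_primeFactors_mul_log_add_one_le hn0.ne' hrough).trans (le_trans ?_ hu)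
      exact log_le_log (mod_cast hn0) ((Nat.cast_le.mpr hnx).trans hfloor)
    · push Not at hrough
      obtain ⟨q, hq, hqp⟩ := hrough
      simp [suppIndicator_eq_zero (P := (p < ·)) hq hqp.not_gt]
  calc
    _ ≤ (∑ n ∈ Ioc 0 ⌊x⌋₊, suppIndicator (p < ·) n) * u := by
      rw [sum_mul]
      exact sum_le_sum homega
    _ ≤ 7 * (x * (3 * u)) / log x * u := by gcongr
    _ = _ := by ring

/-! ### Splitting according to the smallest prime factor -/

lemma minFac_mul_eq_iff {p m : ℕ} (hp : p.Prime) (hm : m ≠ 0) :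
    (p * m).minFac = p ↔ ∀ q ∈ m.primeFactors, p ≤ q := by
  have hle : (p * m).minFac ≤ p := Nat.minFac_le_of_dvd hp.two_le (dvd_mul_right p m)
  have hne : p * m ≠ 1 := fun h => hp.ne_one (Nat.eq_one_of_mul_eq_one_right h)
  rw [← hle.ge_iff_eq, ← or_iff_right (b := p ≤ (p * m).minFac) hne, Nat.le_minFac]
  constructor
  · intro h q hq
    exact h q (Nat.prime_of_mem_primeFactors hq) ((Nat.dvd_of_mem_primeFactors hq).mul_left p)
  · intro h q hq hd
    rcases hq.dvd_mul.mp hd with hd | hd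
    · exact ((Nat.prime_dvd_prime_iff_eq hq hp).mp hd).ge
    · exact h q (Nat.mem_primeFactors.mpr ⟨hq, hd, hm⟩)

lemma moebius_mul_card_primeFactors_of_minFac_eq {p m : ℕ} (hp : p.Prime) (hm : m ≠ 0)
    (h : (p * m).minFac = p) :
    (moebius (p * m) : ℝ) * ((p * m).primeFactors.card : ℝ) =
      -(suppMoebius (p < ·) m * (1 + m.primeFactors.card)) := by
  rw [suppMoebius_apply]
  by_cases hpm : p ∣ m
  · have hsq : moebius (p * m) = 0 := moebius_eq_zero_of_not_squarefree fun hs =>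
      hp.not_isUnit (hs p (Nat.mul_dvd_mul_left p hpm))
    rw [suppIndicator_eq_zero (Nat.mem_primeFactors.mpr ⟨hp, hpm, hm⟩) p.lt_irrefl, hsq]
    simp
  · have hcop : p.Coprime m := (Nat.Prime.coprime_iff_not_dvd hp).mpr hpm
    have hrough (q : ℕ) (hq : q ∈ m.primeFactors) : p < q := by
      refine ((minFac_mul_eq_iff hp hm).mp h q hq).lt_of_ne ?_
      rintro rfl
      exact hpm (Nat.dvd_of_mem_primeFactors hq)
    rw [suppIndicator_eq_one hm hrough, isMultiplicative_moebius.map_mul_of_coprime hcop,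
      moebius_apply_prime hp, hcop.primeFactors_mul,
      card_union_of_disjoint hcop.disjoint_primeFactors, hp.primeFactors, card_singleton]
    push_cast
    ring

lemma suppMoebius_lt_eq_zero_of_minFac_ne {p m : ℕ} (hp : p.Prime) (hm : m ≠ 0)
    (h : (p * m).minFac ≠ p) : suppMoebius (p < ·) m = 0 := by
  rw [Ne, minFac_mul_eq_iff hp hm] at h
  push Not at h
  obtain ⟨q, hq, hqp⟩ := h
  rw [suppMoebius_apply, suppIndicator_eq_zero hq hqp.not_gt, mul_zero]

lemma filter_minFac_eq_image {p : ℕ} (hp : p.Prime) (N : ℕ) :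
    {n ∈ Icc 2 N | n.minFac = p} =
      {m ∈ Ioc 0 (N / p) | (p * m).minFac = p}.image (p * ·) := by
  ext n
  simp only [mem_filter, mem_Ioc, mem_image, mem_Icc, Nat.le_div_iff_mul_le hp.pos]
  constructor
  · rintro ⟨⟨hn2, hnN⟩, h⟩
    obtain ⟨m, rfl⟩ : p ∣ n := h ▸ n.minFac_dvd
    have hm0 : m ≠ 0 := right_ne_zero_of_mul (by lia : p * m ≠ 0)
    exact ⟨m, ⟨⟨Nat.pos_of_ne_zero hm0, by rwa [mul_comm]⟩, h⟩, rfl⟩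
  · rintro ⟨m, ⟨⟨hm0, hmN⟩, h⟩, rfl⟩
    exact ⟨⟨hp.two_le.trans (Nat.le_mul_of_pos_right p hm0), by rwa [mul_comm]⟩, h⟩

lemma sum_filter_minFac_eq {p : ℕ} (hp : p.Prime) (N : ℕ) :
    ∑ n ∈ Icc 2 N with n.minFac = p, (moebius n : ℝ) * (n.primeFactors.card : ℝ) =
      -∑ m ∈ Ioc 0 (N / p), suppMoebius (p < ·) m * (1 + m.primeFactors.card) := by
  rw [filter_minFac_eq_image hp, sum_image fun a _ b _ h => Nat.eq_of_mul_eq_mul_left hp.pos h,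
    sum_filter, ← sum_neg_distrib]
  refine sum_congr rfl fun m hm => ?_
  have hm0 := (mem_Ioc.mp hm).1.ne'
  split_ifs with h
  · exact moebius_mul_card_primeFactors_of_minFac_eq hp hm0 h
  · rw [suppMoebius_lt_eq_zero_of_minFac_ne hp hm0 h, zero_mul, neg_zero]

-- The threshold is `exp (log x / (600 log log x)) / 3`, rounded down but never below `1`.
lemma exists_threshold {x : ℝ} (hx : 16 ≤ x) : ∃ P : ℕ, 1 ≤ P ∧ P ≤ x ∧
    (∀ p : ℕ, p.Prime → p ≤ P → 600 * log (log x) * Real.log (3 * p) ≤ log x) ∧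
    log x ≤ 1800 * log (log x) * Real.log (P + 1) := by
  have hloglog := one_le_log_log hx
  have hL : 0 < log x := log_pos (by linarith)
  set u := 600 * log (log x)
  have hu : 0 < u := by positivity
  set y := exp (log x / u) / 3
  have hy : exp (log x / u) = 3 * y := by ring
  have hyx : y ≤ x :=
    calc
      y ≤ exp (log x / u) := div_le_self (exp_pos _).le (by norm_num)
      _ ≤ exp (log x) := exp_le_exp.mpr (div_le_self hL.le (by linarith))
      _ = x := exp_log (by linarith)
  have hfloor : ⌊y⌋₊ ≤ y := Nat.floor_le (by positivity)
  refine ⟨max 1 ⌊y⌋₊, le_max_left _ _, ?_, fun p hp hpP => ?_, ?_⟩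
  · rw [Nat.cast_max]
    exact max_le (by norm_num; linarith) (hfloor.trans hyx)
  · have hpy : (p : ℝ) ≤ y :=
      (Nat.cast_le.mpr ((le_max_iff.mp hpP).resolve_left hp.one_lt.not_ge)).trans hfloor
    have hp0 : (0 : ℝ) < p := mod_cast hp.pos
    rw [← le_div_iff₀' hu, log_le_iff_le_exp (by positivity)]
    linarith
  · set P := max 1 ⌊y⌋₊
    have hP : (1 : ℝ) ≤ P := mod_cast le_max_left _ _
    have hyP : y < P + 1 := (Nat.lt_floor_add_one y).trans_le
      (by gcongr; exact le_max_right _ _)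
    calc
      log x ≤ u * Real.log (3 * (P + 1)) := by
        rw [← div_le_iff₀' hu, le_log_iff_exp_le (by positivity)]
        linarith
      _ ≤ u * (3 * Real.log (P + 1)) := by
        gcongr
        exact log_three_mul_le (by linarith)
      _ = _ := by ring

lemma sum_primesLE_one_div_le_log_log {p : ℕ} {x : ℝ} (hx : 16 ≤ x) (hp : 1 ≤ p) (hpx : p ≤ x) :
    ∑ q ∈ p.primesLE, (1 : ℝ) / q ≤ 9 * log (log x) := by
  have : (0 : ℝ) < p := mod_cast hp
  have hL : 5 / 2 ≤ log x := by linarith [exp_one_gt_d9, exp_one_le_log hx]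
  have hlog : Real.log (3 * p) ≤ 2 * log x := by
    rw [← Nat.cast_ofNat (n := 2) (R := ℝ), ← log_pow]
    exact log_le_log (by positivity) (by nlinarith)
  have hlog0 := one_le_log_three_mul (y := p) (mod_cast hp)
  calc
    _ ≤ 3 * log (3 * Real.log (3 * p)) := sum_primesLE_one_div_le hp
    _ ≤ 3 * log (log x ^ 3) := by
      gcongr
      nlinarith [mul_le_mul hL hL (by norm_num) (by linarith)]
    _ = _ := by
      rw [log_pow]
      push_cast
      ring

lemma abs_sum_moebius_mul_card_primeFactors_le {P N : ℕ} {s : Finset ℕ} (hs : s ⊆ Ioc 0 N)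
    (hP : ∀ n ∈ s, P < n.minFac) :
    |∑ n ∈ s, (moebius n : ℝ) * (n.primeFactors.card : ℝ)| ≤
      ∑ n ∈ Ioc 0 N, suppIndicator (P < ·) n * n.primeFactors.card := by
  refine (abs_sum_le_sum_abs _ _).trans ((sum_le_sum fun n hn => ?_).trans
    (sum_le_sum_of_subset_of_nonneg hs fun n _ _ =>
      mul_nonneg (suppIndicator_nonneg _ n) (Nat.cast_nonneg _)))
  have hrough (q : ℕ) (hq : q ∈ n.primeFactors) : P < q :=
    (hP n hn).trans_le (Nat.minFac_le_of_dvd (Nat.prime_of_mem_primeFactors hq).two_le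
      (Nat.dvd_of_mem_primeFactors hq))
  rw [suppIndicator_eq_one (mem_Ioc.mp (hs hn)).1.ne' hrough, abs_mul, Nat.abs_cast]
  gcongr
  exact abs_moebius_cast_le_one n

lemma abs_sum_minFac_le_le_sum (Q : ℕ → Prop) [DecidablePred Q] (P N : ℕ) :
    |∑ n ∈ Icc 2 N with Q n.minFac ∧ n.minFac ≤ P,
        (moebius n : ℝ) * (n.primeFactors.card : ℝ)| ≤
      ∑ p ∈ P.primesLE, ∑ d ∈ Ioc 0 (N / p),
        primaryIndicator d * |suppMertens (p < ·) (N / p / d)| := by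
  have hmaps (n : ℕ) (hn : n ∈ {n ∈ Icc 2 N | Q n.minFac ∧ n.minFac ≤ P}) :
      n.minFac ∈ P.primesLE := by
    obtain ⟨hn, -, hnP⟩ := mem_filter.mp hn
    have hn2 := (mem_Icc.mp hn).1
    exact Nat.mem_primesLE.mpr ⟨hnP, Nat.minFac_prime (by lia)⟩
  rw [← sum_fiberwise_of_maps_to hmaps]
  refine (abs_sum_le_sum_abs _ _).trans (sum_le_sum fun p hp => ?_)
  obtain ⟨hpP, hp⟩ := Nat.mem_primesLE.mp hp
  rw [filter_filter]
  by_cases hQ : Q p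
  · have hfilter : {n ∈ Icc 2 N | (Q n.minFac ∧ n.minFac ≤ P) ∧ n.minFac = p} =
        {n ∈ Icc 2 N | n.minFac = p} :=
      filter_congr fun n _ => and_iff_right_of_imp fun h => h.symm ▸ ⟨hQ, hpP⟩
    rw [hfilter, sum_filter_minFac_eq hp, abs_neg]
    exact abs_sum_suppMoebius_mul_one_add_card_primeFactors_le _ _
  · rw [filter_false_of_mem fun n _ (h : _ ∧ n.minFac = p) => hQ (h.2 ▸ h.1.1), sum_empty, abs_zero]
    exact sum_nonneg fun d _ => mul_nonneg (primaryIndicator_nonneg d) (abs_nonneg _)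

lemma exists_abs_sum_minFac_le_le : ∃ C > 0, ∀ (Q : ℕ → Prop) [DecidablePred Q] (P : ℕ) (x : ℝ),
    16 ≤ x → 1 ≤ P → P ≤ x →
    (∀ p : ℕ, p.Prime → p ≤ P → 600 * log (log x) * Real.log (3 * p) ≤ log x) →
    |∑ n ∈ Icc 2 ⌊x⌋₊ with Q n.minFac ∧ n.minFac ≤ P,
        (moebius n : ℝ) * (n.primeFactors.card : ℝ)| ≤
      C * (x * log (log x) ^ 2 / log x) := by
  obtain ⟨C, hC, hbound⟩ := exists_sum_primaryIndicator_mul_abs_suppMertens_floor_le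
  refine ⟨9 * C, by positivity, fun Q _ P x hx hP hPx hsmall => ?_⟩
  have hloglog := one_le_log_log hx
  have hL : 0 < log x := log_pos (by linarith)
  calc
    _ ≤ ∑ p ∈ P.primesLE, C * (1 / p * (x * log (log x) / log x)) := by
      refine (abs_sum_minFac_le_le_sum Q P _).trans (sum_le_sum fun p hp => ?_)
      obtain ⟨hpP, hp⟩ := Nat.mem_primesLE.mp hp
      exact hbound p x hp hx (hsmall p hp hpP)
    _ = C * ((∑ p ∈ P.primesLE, (1 : ℝ) / p) * (x * log (log x) / log x)) := by
      rw [sum_mul, mul_sum]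
    _ ≤ C * (9 * log (log x) * (x * log (log x) / log x)) := by
      gcongr
      exact sum_primesLE_one_div_le_log_log hx hP hPx
    _ = _ := by ring

end MoebiusOmega

open MoebiusOmega in
theorem moebius_omega_smallest_factor_progression_bound_general :
    ∃ C > 0, ∀ (Q : ℕ → Prop) [DecidablePred Q] (x : ℝ), 16 ≤ x →
      |∑ n ∈ Icc 2 ⌊x⌋₊ with Q n.minFac, (moebius n : ℝ) * (n.primeFactors.card : ℝ)| ≤
        C * x * log (log x) ^ 2 / log x := by
  obtain ⟨C, hC, hsmall⟩ := exists_abs_sum_minFac_le_le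
  refine ⟨C + 21 * 1800 ^ 2, by positivity, fun Q _ x hx => ?_⟩
  obtain ⟨P, hP, hPx, hP_small, hP_large⟩ := exists_threshold hx
  have hrough := sum_suppIndicator_lt_mul_card_primeFactors_le hP hPx
    (by linarith [exp_one_lt_d9]) hP_large
  have hsplit := sum_filter_add_sum_filter_not ({n ∈ Icc 2 ⌊x⌋₊ | Q n.minFac})
    (fun n => n.minFac ≤ P) fun n => (moebius n : ℝ) * (n.primeFactors.card : ℝ)
  rw [filter_filter, filter_filter] at hsplit
  rw [← hsplit]
  calc
    _ ≤ C * (x * log (log x) ^ 2 / log x) +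
        21 * (x * (1800 * log (log x)) ^ 2 / log x) := by
      refine (abs_add_le _ _).trans (add_le_add (hsmall Q P x hx hP hPx hP_small)
        ((abs_sum_moebius_mul_card_primeFactors_le (fun n hn => ?_) fun n hn => ?_).trans hrough))
      · obtain ⟨hn2, hnx⟩ := mem_Icc.mp (mem_filter.mp hn).1
        exact mem_Ioc.mpr ⟨by lia, hnx⟩
      · exact not_le.mp (mem_filter.mp hn).2.2
    _ = _ := by ring

/-- For fixed `1 ≤ ℓ ≤ k` with `gcd(ℓ,k) = 1`, there is `C > 0` with
`|Σ_{2 ≤ n ≤ x, p(n) ≡ ℓ (mod k)} μ(n) ω(n)| ≤ C x (log log x)⁴ / log x`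
for all `x ≥ 16`, where `p(n)` is the smallest prime factor of `n`. -/
theorem moebius_omega_smallest_factor_progression_bound
    (k ℓ : ℕ) (hl : 1 ≤ ℓ) (hlk : ℓ ≤ k) (hgcd : Nat.gcd ℓ k = 1) :
    ∃ C > (0 : ℝ), ∀ x : ℝ, 16 ≤ x →
      |∑ n ∈ (Finset.Icc 2 ⌊x⌋₊).filter (fun n => n.minFac ≡ ℓ [MOD k]),
          (moebius n : ℝ) * (n.primeFactors.card : ℝ)|
        ≤ C * x * (Real.log (Real.log x)) ^ 4 / Real.log x := by
  obtain ⟨C, hC, hbound⟩ := moebius_omega_smallest_factor_progression_bound_general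
  refine ⟨C, hC, fun x hx => (hbound (· ≡ ℓ [MOD k]) x hx).trans ?_⟩
  have hloglog := MoebiusOmega.one_le_log_log hx
  have hL : 0 < log x := log_pos (by linarith)
  gcongr
  norm_num
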